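/- arXiv:2211.00308 — 2 statements merged into one kernel-verified Lean document; each statement's English description precedes it below -/
import Mathlib

section
/- Let γ > 0, 1 < α < 2, p > 1, a > 0, b > 0, and let β ∈ [α/2, α). Suppose w ∈ C¹([0,∞)), w ≢ 0, the function t ↦ ₀I_t^{2−α}(w(s) − w'(0)s − w(0)) is in AC²([0,T]) for every T > 0, and for almost every t ≥ 0 one has (₀D_t^α w)(t) + a·w(t) ≥ b·(₀I_t^γ (|w|^p))(t). If α + γ > 2, then liminf_{t→+∞} t^{1−γ−β}·(₀I_t^β w)(t) > 0. -/
/-!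
Write `k_σ(t) = t^(σ-1) / Γ(σ)` and let `K_σ` be the Mittag-Leffler kernel
`K_σ = ∑ₙ (-a)ⁿ k_{αn+σ}`. Variation of constants gives
`₀I^β w = K_{β+α} * (₀D^α w + a w) + w(0) K_{β+1} + w'(0) K_{β+2}`.

Everything rests on a sharp bound, `|K_σ| ≤ k_σ` for `σ ≥ α/2`. The analogous kernel `e` of order
`θ = α/2 ∈ (1/2, 1)` with complex parameter `z` solves a relaxation equation of order `θ`, and when
`Re z ≤ 0` a maximum principle for fractional derivatives shows that `|t^(1-θ) e(t)|` is at most its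
value at `0`; the bound is the real part of the case `z = i √a`, and the imaginary part gives
`√a |K_{σ+α/2}| ≤ k_σ`.

Since `a K_{β+α} = k_β - K_β`, the kernel `K_{β+α}` is nonnegative and `∫₀ᵗ K_{β+α}` is of exact
order `t^β`. The forcing is at least `c t^(γ-1)`, so the convolution is at least a multiple of
`t^(γ+β-1)`, whereas the initial data contribute only `O(t^(β-α/2)) + O(t^(β+1-α))`, which is
negligible because `α + γ > 2`.
-/

open MeasureTheory Filter

/-- Riemann–Liouville fractional integral of order `σ` based at `0`:
`(₀I_t^σ f)(t) = (1/Γ(σ)) ∫₀ᵗ (t−s)^{σ−1} f(s) ds`. -/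
noncomputable def rlInt (σ : ℝ) (f : ℝ → ℝ) (t : ℝ) : ℝ :=
  (1 / Real.Gamma σ) * ∫ s in (0:ℝ)..t, (t - s) ^ (σ - 1) * f s

/-- The function whose second derivative is the (left) Caputo derivative of order `α ∈ (1,2]`:
for `α < 2` it is `₀I_t^{2−α}(w(s) − w'(0)·s − w(0))`, and for `α = 2` it is `w` itself. -/
noncomputable def capKernel (α : ℝ) (w : ℝ → ℝ) : ℝ → ℝ :=
  if α = 2 then w else rlInt (2 - α) (fun s => w s - deriv w 0 * s - w 0)

/-- Left Caputo fractional derivative of order `α ∈ (1,2]`: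
`(₀D_t^α w)(t) = (d²/dt²)[ ₀I_t^{2−α}(w(s) − w'(0)s − w(0)) ](t)` (second derivative of `w` when `α = 2`). -/
noncomputable def caputoD (α : ℝ) (w : ℝ → ℝ) : ℝ → ℝ :=
  deriv (deriv (capKernel α w))

/-- `g ∈ AC²([0,T])`: `g` is differentiable on `[0,T]`, its second derivative is integrable,
and `g'` is the integral of `g''` (i.e. `g'` is absolutely continuous). -/
def AC2On (g : ℝ → ℝ) (T : ℝ) : Prop :=
  (∀ t ∈ Set.Icc (0:ℝ) T, DifferentiableAt ℝ g t) ∧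
  IntervalIntegrable (deriv (deriv g)) volume 0 T ∧
  ∀ t ∈ Set.Icc (0:ℝ) T, deriv g t = deriv g 0 + ∫ s in (0:ℝ)..t, deriv (deriv g) s

open Set Topology

/-! ### Volterra convolution -/

section VolterraConv

variable {E : Type*} [NormedAddCommGroup E] [NormedSpace ℝ E]

/-- Volterra convolution `∫₀ᵗ f(t-s) • g(s) ds` of a scalar kernel with a vector-valued function;
only the values on `(0, t)` matter. -/
noncomputable def volterraConv (f : ℝ → ℝ) (g : ℝ → E) (t : ℝ) : E :=
  ∫ s in (0 : ℝ)..t, f (t - s) • g s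

/-- Integrability of the integrand of `volterraConv f g t`, without which that integral is `0` by
convention. -/
def VolterraConvExistsAt (f : ℝ → ℝ) (g : ℝ → E) (t : ℝ) : Prop :=
  IntervalIntegrable (fun s => f (t - s) • g s) volume 0 t

lemma volterraConv_comm (f g : ℝ → ℝ) : volterraConv f g = volterraConv g f := by
  ext t
  have h := intervalIntegral.integral_comp_sub_left (a := 0) (b := t) (fun s => f (t - s) * g s) t
  simp only [sub_self, sub_zero, sub_sub_cancel] at h
  simpa only [volterraConv, smul_eq_mul, mul_comm] using h.symm

lemma volterraConv_eq_setIntegral (f : ℝ → ℝ) (g : ℝ → E) {t : ℝ} (ht : 0 ≤ t) :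
    volterraConv f g t = ∫ s in Ioo 0 t, f (t - s) • g s := by
  rw [volterraConv, intervalIntegral.integral_of_le ht, integral_Ioc_eq_integral_Ioo]

lemma VolterraConvExistsAt.integrableOn {f : ℝ → ℝ} {g : ℝ → E} {t : ℝ}
    (h : VolterraConvExistsAt f g t) (ht : 0 ≤ t) :
    IntegrableOn (fun s => f (t - s) • g s) (Ioo 0 t) :=
  (intervalIntegrable_iff_integrableOn_Ioo_of_le ht).1 h

lemma volterraConv_congr {f f' : ℝ → ℝ} {g g' : ℝ → E} {t : ℝ} (ht : 0 ≤ t)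
    (hf : EqOn f f' (Ioo 0 t)) (hg : EqOn g g' (Ioo 0 t)) :
    volterraConv f g t = volterraConv f' g' t := by
  rw [volterraConv_eq_setIntegral f g ht, volterraConv_eq_setIntegral f' g' ht]
  refine setIntegral_congr_fun measurableSet_Ioo fun s hs => ?_
  simp only [hg hs, hf (show t - s ∈ Ioo 0 t from ⟨sub_pos.2 hs.2, sub_lt_self t hs.1⟩)]

lemma volterraConv_const_smul_right {𝕜 : Type*} [NormedDivisionRing 𝕜] [Module 𝕜 E]
    [NormSMulClass 𝕜 E] [SMulCommClass ℝ 𝕜 E] (c : 𝕜) (f : ℝ → ℝ) (g : ℝ → E) (t : ℝ) :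
    volterraConv f (fun s => c • g s) t = c • volterraConv f g t := by
  simp only [volterraConv, ← intervalIntegral.integral_smul, smul_comm]

lemma volterraConv_add_right {f : ℝ → ℝ} {g h : ℝ → E} {t : ℝ}
    (hg : VolterraConvExistsAt f g t) (hh : VolterraConvExistsAt f h t) :
    volterraConv f (fun s => g s + h s) t = volterraConv f g t + volterraConv f h t := by
  simp only [volterraConv, smul_add]
  exact intervalIntegral.integral_add hg hh

lemma volterraConv_add_const_smul_right {f : ℝ → ℝ} {g h : ℝ → E} {t : ℝ} (c : ℝ)
    (hg : VolterraConvExistsAt f g t) (hh : VolterraConvExistsAt f h t) :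
    volterraConv f (fun s => g s + c • h s) t = volterraConv f g t + c • volterraConv f h t := by
  have hch : VolterraConvExistsAt f (fun s => c • h s) t := by
    simpa only [VolterraConvExistsAt, Pi.smul_def, smul_comm c] using IntervalIntegrable.smul hh c
  rw [volterraConv_add_right hg hch, volterraConv_const_smul_right]

lemma VolterraConvExistsAt.symm {f g : ℝ → ℝ} {t : ℝ} (h : VolterraConvExistsAt f g t) :
    VolterraConvExistsAt g f t := by
  have h' := (IntervalIntegrable.comp_sub_left h t).symm
  simpa only [VolterraConvExistsAt, sub_self, sub_zero, sub_sub_cancel, smul_eq_mul, mul_comm]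
    using h'

lemma VolterraConvExistsAt.of_continuousOn_right {f : ℝ → ℝ} {g : ℝ → E} {t : ℝ} (ht : 0 ≤ t)
    (hf : IntervalIntegrable f volume 0 t) (hg : ContinuousOn g (Icc 0 t)) :
    VolterraConvExistsAt f g t := by
  have hf' := (hf.comp_sub_left t).symm
  rw [sub_self, sub_zero] at hf'
  exact hf'.smul_continuousOn (by rwa [uIcc_of_le ht])

lemma volterraConv_eq_zero_of_nonpos {f g : ℝ → ℝ} (hg : ∀ s ≤ 0, g s = 0) {t : ℝ} (ht : t ≤ 0) :
    volterraConv f g t = 0 := by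
  rw [volterraConv, intervalIntegral.integral_symm, intervalIntegral.integral_of_le ht,
    setIntegral_eq_zero_of_forall_eq_zero fun s hs => by simp [hg s hs.2], neg_zero]

open scoped Convolution in
lemma volterraConv_eq_convolution {f g : ℝ → ℝ} (hf : ∀ s ≤ 0, f s = 0) (hg : ∀ s ≤ 0, g s = 0) :
    volterraConv f g = g ⋆[ContinuousLinearMap.mul ℝ ℝ, volume] f := by
  ext t
  have hzero : ∀ s, s ∉ Ioc 0 t → g s * f (t - s) = 0 := fun s hs => by
    rcases le_or_gt s 0 with h | h
    · rw [hg s h, zero_mul]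
    · rw [hf _ (sub_nonpos.2 (not_le.1 fun hst => hs ⟨h, hst⟩).le), mul_zero]
  rw [convolution_def]
  simp only [ContinuousLinearMap.mul_apply']
  rcases le_total t 0 with ht | ht
  · rw [volterraConv_eq_zero_of_nonpos hg ht,
      integral_eq_zero_of_ae (ae_of_all _ fun s => hzero s (by simp [ht]))]
  · rw [← setIntegral_eq_integral_of_forall_compl_eq_zero hzero, volterraConv,
      intervalIntegral.integral_of_le ht]
    simp only [smul_eq_mul, mul_comm]

section Truncation

variable {f : ℝ → ℝ} {t : ℝ}

lemma indicator_Ioc_zero_of_nonpos (f : ℝ → ℝ) (t : ℝ) : ∀ s ≤ 0, (Ioc 0 t).indicator f s = 0 :=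
  fun _ hs => indicator_of_notMem (fun h => h.1.not_ge hs) f

lemma integrable_indicator_Ioc (ht : 0 ≤ t) (hf : IntervalIntegrable f volume 0 t) :
    Integrable ((Ioc 0 t).indicator f) :=
  (integrable_indicator_iff measurableSet_Ioc).2
    ((intervalIntegrable_iff_integrableOn_Ioc_of_le ht).1 hf)

lemma eqOn_indicator_Ioc (f : ℝ → ℝ) (t : ℝ) : EqOn f ((Ioc 0 t).indicator f) (Ioo 0 t) :=
  fun _ hs => (indicator_of_mem (Ioo_subset_Ioc_self hs) f).symm

lemma eqOn_volterraConv_indicator_Ioc (f g : ℝ → ℝ) (t : ℝ) :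
    EqOn (volterraConv f g) (volterraConv ((Ioc 0 t).indicator f) ((Ioc 0 t).indicator g))
      (Ioo 0 t) := fun _ hs =>
  have hsub := Ioo_subset_Ioo_right hs.2.le
  volterraConv_congr hs.1.le ((eqOn_indicator_Ioc f t).mono hsub)
    ((eqOn_indicator_Ioc g t).mono hsub)

end Truncation

open scoped Convolution in
lemma volterraConv_assoc {f g h : ℝ → ℝ} {t : ℝ} (ht : 0 ≤ t)
    (hf : IntervalIntegrable f volume 0 t) (hg : IntervalIntegrable g volume 0 t)
    (hh : ContinuousOn h (Icc 0 t)) :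
    volterraConv f (volterraConv g h) t = volterraConv (volterraConv f g) h t := by
  set F := (Ioc 0 t).indicator f
  set G := (Ioc 0 t).indicator g
  set H := (Ioc 0 t).indicator h
  have hF : Integrable F := integrable_indicator_Ioc ht hf
  have hG : Integrable G := integrable_indicator_Ioc ht hg
  have hH : Integrable H := integrable_indicator_Ioc ht (hh.intervalIntegrable_of_Icc ht)
  obtain ⟨C, hC⟩ := isCompact_Icc.exists_bound_of_continuousOn hh
  have hHbound : ∀ s, ‖‖H s‖‖ ≤ max C 0 := fun s => by
    rw [norm_norm]
    by_cases hs : s ∈ Ioc 0 t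
    · simpa [H, hs] using Or.inl (hC s (Ioc_subset_Icc_self hs))
    · simp [H, hs]
  have hF0 := indicator_Ioc_zero_of_nonpos f t
  have hG0 := indicator_Ioc_zero_of_nonpos g t
  have hH0 := indicator_Ioc_zero_of_nonpos h t
  have hassoc := convolution_assoc (μ := volume) (ν := volume) (x₀ := t)
    (.mul ℝ ℝ) (.mul ℝ ℝ) (.mul ℝ ℝ) (.mul ℝ ℝ) mul_assoc hH.aestronglyMeasurable
    hG.aestronglyMeasurable hF.aestronglyMeasurable (hH.ae_convolution_exists _ hG)
    (hG.norm.ae_convolution_exists _ hF.norm)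
    (((hG.norm.integrable_convolution _ hF.norm).comp_sub_left t).bdd_mul
      hH.aestronglyMeasurable.norm (ae_of_all _ hHbound))
  calc volterraConv f (volterraConv g h) t
      = volterraConv F (volterraConv G H) t :=
        volterraConv_congr ht (eqOn_indicator_Ioc f t) (eqOn_volterraConv_indicator_Ioc g h t)
    _ = ((H ⋆[.mul ℝ ℝ] G) ⋆[.mul ℝ ℝ] F) t := by
        rw [volterraConv_eq_convolution hF0 fun s => volterraConv_eq_zero_of_nonpos hH0,
          volterraConv_eq_convolution hG0 hH0]
    _ = (H ⋆[.mul ℝ ℝ] (G ⋆[.mul ℝ ℝ] F)) t := hassoc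
    _ = volterraConv (volterraConv F G) H t := by
        rw [← volterraConv_eq_convolution hF0 hG0, volterraConv_eq_convolution
          (fun s => volterraConv_eq_zero_of_nonpos hG0) hH0]
    _ = volterraConv (volterraConv f g) h t :=
        (volterraConv_congr ht (eqOn_volterraConv_indicator_Ioc f g t)
          (eqOn_indicator_Ioc h t)).symm

lemma volterraConv_left_comm {k f g : ℝ → ℝ} {t : ℝ} (ht : 0 ≤ t) (hk : ContinuousOn k (Icc 0 t))
    (hf : IntervalIntegrable f volume 0 t) (hg : IntervalIntegrable g volume 0 t) :
    volterraConv (volterraConv k f) g t = volterraConv f (volterraConv k g) t := by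
  rw [volterraConv_comm _ g, volterraConv_comm k f, volterraConv_comm k g,
    volterraConv_assoc ht hg hf hk, volterraConv_assoc ht hf hg hk, volterraConv_comm g f]

end VolterraConv

/-! ### Riemann–Liouville kernels and integrals -/

/-- The Riemann–Liouville kernel `k_σ(t) = t^(σ-1) / Γ(σ)`, meant for `0 < σ` and `0 < t`. -/
noncomputable def rlKernel (σ t : ℝ) : ℝ := t ^ (σ - 1) / Real.Gamma σ

section RLKernel

variable {σ τ t : ℝ}

lemma rlKernel_pos (hσ : 0 < σ) (ht : 0 < t) : 0 < rlKernel σ t :=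
  div_pos (Real.rpow_pos_of_pos ht _) (Real.Gamma_pos_of_pos hσ)

lemma rlKernel_one : rlKernel 1 t = 1 := by simp [rlKernel]

lemma rlKernel_two : rlKernel 2 t = t := by
  simp [rlKernel, show (2 : ℝ) - 1 = 1 by norm_num]

lemma mul_rlKernel (hσ : 0 < σ) (ht : 0 < t) : t * rlKernel σ t = σ * rlKernel (σ + 1) t := by
  have hΓ := (Real.Gamma_pos_of_pos hσ).ne'
  rw [rlKernel, rlKernel, Real.Gamma_add_one hσ.ne', add_sub_cancel_right, Real.rpow_sub_one ht.ne']
  field_simp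

lemma intervalIntegrable_rlKernel (hσ : 0 < σ) (a b : ℝ) :
    IntervalIntegrable (rlKernel σ) volume a b :=
  (intervalIntegral.intervalIntegrable_rpow' (by linarith)).div_const _

lemma integral_rpow_mul_sub_rpow (hσ : 0 < σ) (hτ : 0 < τ) (ht : 0 < t) :
    ∫ s in (0 : ℝ)..t, s ^ (σ - 1) * (t - s) ^ (τ - 1) =
      t ^ (σ + τ - 1) * (Real.Gamma σ * Real.Gamma τ / Real.Gamma (σ + τ)) := by
  have hbeta := Complex.betaIntegral_scaled (σ : ℂ) (τ : ℂ) ht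
  rw [Complex.betaIntegral_eq_Gamma_mul_div _ _ (by simpa) (by simpa)] at hbeta
  apply Complex.ofReal_injective
  rw [← intervalIntegral.integral_ofReal]
  simp only [Complex.ofReal_mul, Complex.ofReal_div, ← Complex.Gamma_ofReal,
    Complex.ofReal_cpow ht.le, Complex.ofReal_add, Complex.ofReal_sub, Complex.ofReal_one]
  rw [← hbeta]
  refine intervalIntegral.integral_congr fun s hs => ?_
  rw [uIcc_of_le ht.le] at hs
  simp [Complex.ofReal_cpow hs.1, Complex.ofReal_cpow (sub_nonneg.2 hs.2)]

lemma volterraConv_rlKernel (hσ : 0 < σ) (hτ : 0 < τ) (ht : 0 < t) :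
    volterraConv (rlKernel τ) (rlKernel σ) t = rlKernel (σ + τ) t := by
  have hΓσ := (Real.Gamma_pos_of_pos hσ).ne'
  have hΓτ := (Real.Gamma_pos_of_pos hτ).ne'
  calc volterraConv (rlKernel τ) (rlKernel σ) t
      = ∫ s in (0 : ℝ)..t, s ^ (σ - 1) * (t - s) ^ (τ - 1) / (Real.Gamma σ * Real.Gamma τ) := by
        refine intervalIntegral.integral_congr fun s _ => ?_
        simp only [rlKernel, smul_eq_mul]
        field_simp
    _ = rlKernel (σ + τ) t := by
        rw [intervalIntegral.integral_div, integral_rpow_mul_sub_rpow hσ hτ ht, rlKernel]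
        field_simp

lemma volterraConvExistsAt_rlKernel (hσ : 0 < σ) (hτ : 0 < τ) (ht : 0 < t) :
    VolterraConvExistsAt (rlKernel τ) (rlKernel σ) t := by
  -- A non-integrable integrand would give the junk value `0`, but the integral is positive.
  refine intervalIntegral.intervalIntegrable_of_integral_ne_zero ?_
  change volterraConv (rlKernel τ) (rlKernel σ) t ≠ 0
  rw [volterraConv_rlKernel hσ hτ ht]
  exact (rlKernel_pos (add_pos hσ hτ) ht).ne'

end RLKernel

section RLInt

variable {σ τ t : ℝ} {f : ℝ → ℝ}

lemma rlInt_eq_volterraConv (σ : ℝ) (f : ℝ → ℝ) : rlInt σ f = volterraConv (rlKernel σ) f := by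
  ext t
  rw [rlInt, ← intervalIntegral.integral_const_mul]
  refine intervalIntegral.integral_congr fun s _ => ?_
  simp only [rlKernel, smul_eq_mul]
  ring

lemma rlInt_const_mul (σ c : ℝ) (f : ℝ → ℝ) : rlInt σ (fun s => c * f s) = c • rlInt σ f := by
  ext t
  rw [rlInt_eq_volterraConv, rlInt_eq_volterraConv]
  exact volterraConv_const_smul_right c (rlKernel σ) f t

lemma rlInt_one_apply (f : ℝ → ℝ) (t : ℝ) : rlInt 1 f t = ∫ s in (0 : ℝ)..t, f s := by
  simp [rlInt]

lemma rlInt_nonneg (hσ : 0 < σ) (hf : ∀ s, 0 ≤ s → 0 ≤ f s) (ht : 0 ≤ t) : 0 ≤ rlInt σ f t :=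
  mul_nonneg (one_div_pos.2 (Real.Gamma_pos_of_pos hσ)).le
    (intervalIntegral.integral_nonneg ht fun s hs =>
      mul_nonneg (Real.rpow_nonneg (sub_nonneg.2 hs.2) _) (hf s hs.1))

lemma rlInt_rlInt (hσ : 0 < σ) (hτ : 0 < τ) (hf : ContinuousOn f (Ici 0)) (ht : 0 ≤ t) :
    rlInt σ (rlInt τ f) t = rlInt (σ + τ) f t := by
  simp only [rlInt_eq_volterraConv]
  rw [volterraConv_assoc ht (intervalIntegrable_rlKernel hσ 0 t)
    (intervalIntegrable_rlKernel hτ 0 t) (hf.mono Icc_subset_Ici_self)]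
  exact volterraConv_congr ht (fun s hs => (volterraConv_rlKernel hτ hσ hs.1).trans
    (by rw [add_comm])) (eqOn_refl _ _)

lemma rlInt_eq_rpow_mul_integral (hσ : 0 < σ) (f : ℝ → ℝ) (ht : 0 ≤ t) :
    rlInt σ f t =
      t ^ σ * (1 / Real.Gamma σ * ∫ x in (0 : ℝ)..1, (1 - x) ^ (σ - 1) * f (t * x)) := by
  rcases ht.eq_or_lt with rfl | ht
  · simp [rlInt, Real.zero_rpow hσ.ne']
  have hscale := intervalIntegral.smul_integral_comp_mul_left (a := 0) (b := 1)
    (fun s => (t - s) ^ (σ - 1) * f s) t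
  rw [mul_zero, mul_one] at hscale
  rw [rlInt, ← hscale, mul_left_comm, smul_eq_mul]
  congr 1
  rw [← intervalIntegral.integral_const_mul, ← intervalIntegral.integral_const_mul]
  refine intervalIntegral.integral_congr fun x hx => ?_
  rw [uIcc_of_le zero_le_one] at hx
  have hpow : t * (t - t * x) ^ (σ - 1) = t ^ σ * (1 - x) ^ (σ - 1) := by
    rw [← mul_one_sub, Real.mul_rpow ht.le (sub_nonneg.2 hx.2), ← mul_assoc,
      Real.rpow_sub_one ht.ne', mul_div_cancel₀ _ ht.ne']
  simp only [← mul_assoc, hpow]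

lemma continuous_integral_mul_comp_mul {k : ℝ → ℝ} (hk : IntervalIntegrable k volume 0 1)
    (hf : Continuous f) : Continuous fun t => ∫ x in (0 : ℝ)..1, k x * f (t * x) := by
  refine continuous_iff_continuousAt.2 fun t₀ => ?_
  obtain ⟨C, hC⟩ := (isCompact_Icc (a := -(|t₀| + 1)) (b := |t₀| + 1)).exists_bound_of_continuousOn
    hf.continuousOn
  refine intervalIntegral.continuousAt_of_dominated_interval (bound := fun x => ‖k x‖ * C)
    (Eventually.of_forall fun t => ?_) ?_ (hk.norm.mul_const C) (ae_of_all _ fun x _ => by fun_prop)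
  · exact hk.def'.aestronglyMeasurable.mul
      (hf.comp (continuous_const_mul t)).aestronglyMeasurable
  · filter_upwards [Metric.ball_mem_nhds t₀ one_pos] with t ht
    refine ae_of_all _ fun x hx => ?_
    rw [uIoc_of_le zero_le_one] at hx
    rw [norm_mul]
    refine mul_le_mul_of_nonneg_left (hC _ (abs_le.1 ?_)) (norm_nonneg _)
    rw [abs_mul, abs_of_pos hx.1]
    have hnorm : |t| ≤ |t₀| + 1 := by
      rw [Metric.mem_ball, Real.dist_eq] at ht
      linarith [abs_sub_abs_le_abs_sub t t₀]
    nlinarith [hx.1, hx.2, abs_nonneg t]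

lemma continuousOn_rlInt (hσ : 0 < σ) (hf : Continuous f) : ContinuousOn (rlInt σ f) (Ici 0) := by
  refine ContinuousOn.congr (Continuous.continuousOn ?_) fun t ht =>
    rlInt_eq_rpow_mul_integral hσ f ht
  have hk : IntervalIntegrable (fun x : ℝ => (1 - x) ^ (σ - 1)) volume 0 1 := by
    have h := (intervalIntegral.intervalIntegrable_rpow' (a := 0) (b := 1) (r := σ - 1)
      (by linarith)).comp_sub_left 1
    simpa using h.symm
  exact (Real.continuous_rpow_const hσ.le).mul
    (continuous_const.mul (continuous_integral_mul_comp_mul hk hf))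

end RLInt

/-! ### Mittag-Leffler kernels -/

-- Only the part of the Gamma integral over `(R, R + 1]` is kept.
lemma exp_mul_rpow_le_Gamma {R s : ℝ} (hR : 0 < R) (hs : 1 ≤ s) :
    Real.exp (-(R + 1)) * R ^ (s - 1) ≤ Real.Gamma s := by
  have hs0 : 0 < s := one_pos.trans_le hs
  have hconv := Real.GammaIntegral_convergent hs0
  have hsub : Ioc R (R + 1) ⊆ Ioi 0 := fun x hx => hR.trans hx.1
  rw [Real.Gamma_eq_integral hs0]
  calc Real.exp (-(R + 1)) * R ^ (s - 1)
      = ∫ _ in Ioc R (R + 1), Real.exp (-(R + 1)) * R ^ (s - 1) := by simp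
    _ ≤ ∫ x in Ioc R (R + 1), Real.exp (-x) * x ^ (s - 1) :=
        setIntegral_mono_on (integrableOn_const (by simp)) (hconv.mono_set hsub) measurableSet_Ioc
          fun x hx => by
            have hRx := hx.1.le
            have hxR := hx.2
            gcongr
    _ ≤ ∫ x in Ioi 0, Real.exp (-x) * x ^ (s - 1) :=
        setIntegral_mono_set hconv
          ((ae_restrict_iff' measurableSet_Ioi).2 (ae_of_all _ fun x hx =>
            mul_nonneg (Real.exp_pos _).le (Real.rpow_nonneg (le_of_lt hx) _)))
          hsub.eventuallyLE

section MittagLeffler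

variable {𝕜 : Type*} [RCLike 𝕜] {θ σ τ t : ℝ}

lemma summable_norm_inv_Gamma_smul_pow (hθ : 0 < θ) (σ : ℝ) (z : 𝕜) :
    Summable fun n : ℕ => ‖(Real.Gamma (θ * n + σ))⁻¹ • z ^ n‖ := by
  obtain ⟨R, hR, hRθ⟩ : ∃ R : ℝ, 0 < R ∧ R ^ θ = ‖z‖ + 1 :=
    ⟨(‖z‖ + 1) ^ θ⁻¹, by positivity, Real.rpow_inv_rpow (by positivity) hθ.ne'⟩
  have hratio : ‖z‖ / (‖z‖ + 1) < 1 := (div_lt_one (by positivity)).2 (lt_add_one _)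
  refine Summable.of_norm_bounded_eventually_nat
    ((summable_geometric_of_lt_one (by positivity) hratio).mul_left
      (Real.exp (R + 1) * R ^ (1 - σ))) ?_
  have hlarge : ∀ᶠ n : ℕ in atTop, 1 ≤ θ * n + σ :=
    (tendsto_atTop_add_const_right _ _
      (tendsto_natCast_atTop_atTop.const_mul_atTop hθ)).eventually_ge_atTop 1
  filter_upwards [hlarge] with n hn
  have hΓ := exp_mul_rpow_le_Gamma hR hn
  have hpos : 0 < Real.exp (-(R + 1)) * R ^ (θ * n + σ - 1) := by positivity
  rw [norm_norm, norm_smul, norm_pow, norm_inv, Real.norm_of_nonneg (hpos.le.trans hΓ)]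
  calc (Real.Gamma (θ * n + σ))⁻¹ * ‖z‖ ^ n
      ≤ (Real.exp (-(R + 1)) * R ^ (θ * n + σ - 1))⁻¹ * ‖z‖ ^ n := by gcongr
    _ = Real.exp (R + 1) * R ^ (1 - σ) * (‖z‖ / (‖z‖ + 1)) ^ n := by
      rw [show θ * n + σ - 1 = θ * n - (1 - σ) by ring, Real.rpow_sub hR, Real.rpow_mul hR.le, hRθ,
        Real.rpow_natCast, Real.exp_neg, div_pow]
      field_simp

/-- The two-parameter Mittag-Leffler function `E_{θ,σ}(z) = ∑ zⁿ / Γ(θ n + σ)`, for `0 < θ`. -/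
noncomputable def mittagLeffler (θ σ : ℝ) (z : 𝕜) : 𝕜 :=
  ∑' n : ℕ, (Real.Gamma (θ * n + σ))⁻¹ • z ^ n

lemma hasSum_mittagLeffler (hθ : 0 < θ) (σ : ℝ) (z : 𝕜) :
    HasSum (fun n : ℕ => (Real.Gamma (θ * n + σ))⁻¹ • z ^ n) (mittagLeffler θ σ z) :=
  (summable_norm_inv_Gamma_smul_pow hθ σ z).of_norm.hasSum

lemma mittagLeffler_zero (θ σ : ℝ) :
    mittagLeffler θ σ (0 : 𝕜) = ((Real.Gamma σ)⁻¹ : ℝ) := by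
  rw [mittagLeffler, tsum_eq_single 0 fun n hn => by simp [hn]]
  simp [RCLike.real_smul_eq_coe_mul]

lemma continuous_mittagLeffler (hθ : 0 < θ) (σ : ℝ) :
    Continuous (mittagLeffler θ σ : 𝕜 → 𝕜) := by
  refine continuous_iff_continuousAt.2 fun z₀ => ?_
  have hball : ContinuousOn (mittagLeffler θ σ : 𝕜 → 𝕜) (Metric.ball 0 (‖z₀‖ + 1)) := by
    refine continuousOn_tsum (fun n => by fun_prop)
      (summable_norm_inv_Gamma_smul_pow hθ σ (‖z₀‖ + 1)) fun n z hz => ?_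
    have hz' : ‖z‖ ≤ ‖z₀‖ + 1 := (mem_ball_zero_iff.1 hz).le
    rw [norm_smul, norm_smul, norm_pow, norm_pow,
      Real.norm_of_nonneg (by positivity : 0 ≤ ‖z₀‖ + 1)]
    gcongr
  exact hball.continuousAt (Metric.isOpen_ball.mem_nhds (by simp))

/-- The Mittag-Leffler kernel `K_σ(t) = t^(σ-1) E_{θ,σ}(z t^θ)`, whose Laplace transform is
`s^(θ-σ) / (s^θ - z)`. -/
noncomputable def mlKernel (θ σ : ℝ) (z : 𝕜) (t : ℝ) : 𝕜 :=
  t ^ (σ - 1) • mittagLeffler θ σ (t ^ θ • z)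

lemma hasSum_mlKernel (hθ : 0 < θ) (σ : ℝ) (z : 𝕜) (ht : 0 < t) :
    HasSum (fun n : ℕ => rlKernel (θ * n + σ) t • z ^ n) (mlKernel θ σ z t) := by
  refine ((hasSum_mittagLeffler hθ σ (t ^ θ • z)).const_smul (t ^ (σ - 1))).congr_fun fun n => ?_
  rw [rlKernel, smul_pow, smul_smul, smul_smul, show θ * n + σ - 1 = θ * n + (σ - 1) by ring,
    Real.rpow_add ht, Real.rpow_mul ht.le, Real.rpow_natCast]
  congr 1
  ring

lemma continuous_mittagLeffler_rpow_smul (hθ : 0 < θ) (σ : ℝ) (z : 𝕜) :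
    Continuous fun t : ℝ => mittagLeffler θ σ (t ^ θ • z) :=
  (continuous_mittagLeffler hθ σ).comp ((Real.continuous_rpow_const hθ.le).smul continuous_const)

lemma continuous_mlKernel (hθ : 0 < θ) (hσ : 1 ≤ σ) (z : 𝕜) : Continuous (mlKernel θ σ z) :=
  (Real.continuous_rpow_const (sub_nonneg.2 hσ)).smul (continuous_mittagLeffler_rpow_smul hθ σ z)

lemma continuousOn_mlKernel (hθ : 0 < θ) (σ : ℝ) (z : 𝕜) :
    ContinuousOn (mlKernel θ σ z) (Ioi 0) :=
  (continuousOn_id.rpow_const fun _ hs => Or.inl (ne_of_gt hs)).smul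
    (continuous_mittagLeffler_rpow_smul hθ σ z).continuousOn

lemma intervalIntegrable_mlKernel (hθ : 0 < θ) (hσ : 0 < σ) (z : 𝕜) (a b : ℝ) :
    IntervalIntegrable (mlKernel θ σ z) volume a b :=
  (intervalIntegral.intervalIntegrable_rpow' (by linarith)).smul_continuousOn
    (continuous_mittagLeffler_rpow_smul hθ σ z).continuousOn

lemma mlKernel_eq_rlKernel_add (hθ : 0 < θ) (σ : ℝ) (z : 𝕜) (ht : 0 < t) :
    mlKernel θ σ z t = (rlKernel σ t : 𝕜) + z * mlKernel θ (σ + θ) z t := by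
  have htail : HasSum (fun n : ℕ => rlKernel (θ * (n + 1 : ℕ) + σ) t • z ^ (n + 1))
      (z * mlKernel θ (σ + θ) z t) := by
    refine ((hasSum_mlKernel hθ (σ + θ) z ht).mul_left z).congr_fun fun n => ?_
    rw [pow_succ', mul_smul_comm]
    push_cast
    ring_nf
  simpa [RCLike.real_smul_eq_coe_mul] using
    (hasSum_mlKernel hθ σ z ht).unique (HasSum.zero_add (f := fun n : ℕ => _) htail)

lemma mlKernel_eq_add_mul (hθ : 0 < θ) (σ : ℝ) (z : 𝕜) (ht : 0 < t) :
    mlKernel θ σ z t = mlKernel (2 * θ) σ (z ^ 2) t + z * mlKernel (2 * θ) (σ + θ) (z ^ 2) t := by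
  have h2θ : 0 < 2 * θ := by positivity
  refine (hasSum_mlKernel hθ σ z ht).unique (HasSum.even_add_odd
    ((hasSum_mlKernel h2θ σ (z ^ 2) ht).congr_fun fun n => ?_)
    (((hasSum_mlKernel h2θ (σ + θ) (z ^ 2) ht).mul_left z).congr_fun fun n => ?_))
  · rw [← pow_mul]
    push_cast
    ring_nf
  · rw [← pow_mul, pow_succ', ← mul_smul_comm]
    push_cast
    ring_nf

lemma ofReal_mlKernel (hθ : 0 < θ) (σ x : ℝ) (ht : 0 < t) :
    ((mlKernel θ σ x t : ℝ) : 𝕜) = mlKernel θ σ (x : 𝕜) t := by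
  refine HasSum.unique ?_ (hasSum_mlKernel hθ σ (x : 𝕜) ht)
  simpa [RCLike.real_smul_eq_coe_mul] using
    (RCLike.hasSum_ofReal 𝕜).2 (hasSum_mlKernel hθ σ x ht)

lemma volterraConvExistsAt_rlKernel_mlKernel (hθ : 0 < θ) (hσ : 0 < σ) (hτ : 0 < τ) (z : 𝕜)
    (ht : 0 < t) : VolterraConvExistsAt (rlKernel τ) (mlKernel θ σ z) t := by
  have hcont : Continuous fun s : ℝ => Real.Gamma σ • mittagLeffler θ σ (s ^ θ • z) :=
    continuous_const.smul (continuous_mittagLeffler_rpow_smul hθ σ z)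
  have h := (volterraConvExistsAt_rlKernel hσ hτ ht).smul_continuousOn hcont.continuousOn
  refine h.congr fun s _ => ?_
  simp only [rlKernel, mlKernel, smul_smul, smul_eq_mul, mul_assoc,
    div_mul_cancel₀ _ (Real.Gamma_pos_of_pos hσ).ne']

lemma volterraConv_rlKernel_mlKernel (hθ : 0 < θ) (hσ : 0 < σ) (hτ : 0 < τ) (z : 𝕜) (ht : 0 < t) :
    volterraConv (rlKernel τ) (mlKernel θ σ z) t = mlKernel θ (σ + τ) z t := by
  have hpos : ∀ n : ℕ, 0 < θ * n + σ := fun n => by positivity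
  have hterm : ∀ s ∈ Ioo 0 t, ∀ n : ℕ, ‖rlKernel τ (t - s) • rlKernel (θ * n + σ) s • z ^ n‖ =
      rlKernel τ (t - s) • rlKernel (θ * n + σ) s • ‖z‖ ^ n := fun s hs n => by
    rw [norm_smul, norm_smul, norm_pow, Real.norm_of_nonneg (rlKernel_pos hτ (sub_pos.2 hs.2)).le,
      Real.norm_of_nonneg (rlKernel_pos (hpos n) hs.1).le, smul_eq_mul, smul_eq_mul]
  have hbound : IntegrableOn
      (fun s => ∑' n : ℕ, ‖rlKernel τ (t - s) • rlKernel (θ * n + σ) s • z ^ n‖) (Ioo 0 t) :=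
    ((volterraConvExistsAt_rlKernel_mlKernel hθ hσ hτ ‖z‖ ht).integrableOn ht.le).congr_fun
      (fun s hs => by
        simp only [hterm s hs, ((hasSum_mlKernel hθ σ ‖z‖ hs.1).const_smul _).tsum_eq])
      measurableSet_Ioo
  have hsum : HasSum
      (fun n : ℕ => ∫ s in Ioo 0 t, rlKernel τ (t - s) • rlKernel (θ * n + σ) s • z ^ n)
      (∫ s in Ioo 0 t, rlKernel τ (t - s) • mlKernel θ σ z s) := by
    refine hasSum_integral_of_dominated_convergence _ (fun n => ?_) (fun n => ae_of_all _ fun s =>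
      le_rfl) ?_ hbound ?_
    · simpa only [smul_smul, smul_eq_mul] using (((volterraConvExistsAt_rlKernel (hpos n) hτ
        ht).integrableOn ht.le).smul_const (z ^ n)).aestronglyMeasurable
    · refine ae_restrict_of_forall_mem measurableSet_Ioo fun s hs => ?_
      simpa only [hterm s hs] using ((hasSum_mlKernel hθ σ ‖z‖ hs.1).const_smul _).summable
    · exact ae_restrict_of_forall_mem measurableSet_Ioo fun s hs =>
        (hasSum_mlKernel hθ σ z hs.1).const_smul _
  rw [volterraConv_eq_setIntegral _ _ ht.le]
  refine hsum.unique ((hasSum_mlKernel hθ (σ + τ) z ht).congr_fun fun n => ?_)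
  rw [← add_assoc, ← volterraConv_rlKernel (hpos n) hτ ht, volterraConv_eq_setIntegral _ _ ht.le,
    ← integral_smul_const]
  simp only [smul_smul, smul_eq_mul]

lemma hasDerivAt_mlKernel (hθ : 0 < θ) (hσ : 0 < σ) (z : 𝕜) (ht : 0 < t) :
    HasDerivAt (mlKernel θ (σ + 1) z) (mlKernel θ σ z t) t := by
  have hmem : Ioi (0 : ℝ) ∈ 𝓝 t := Ioi_mem_nhds ht
  have hcont := continuousOn_mlKernel hθ σ z
  refine (intervalIntegral.integral_hasDerivAt_right (intervalIntegrable_mlKernel hθ hσ z 0 t)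
    (hcont.stronglyMeasurableAtFilter isOpen_Ioi t ht)
    (hcont.continuousAt hmem)).congr_of_eventuallyEq ?_
  filter_upwards [hmem] with s hs
  simp [← volterraConv_rlKernel_mlKernel hθ hσ one_pos z hs, volterraConv, rlKernel_one]

lemma volterraConvExistsAt_rlKernel_smul_mlKernel (hθ : 0 < θ) (hσ : 0 < σ) (hτ : 0 < τ) (z : 𝕜)
    (ht : 0 < t) : VolterraConvExistsAt (rlKernel τ) (fun s => s • mlKernel θ σ z s) t := by
  refine ((volterraConvExistsAt_rlKernel_mlKernel hθ hσ hτ z ht).continuousOn_smul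
    continuousOn_id).congr fun s _ => ?_
  exact smul_comm _ _ _

lemma volterraConv_rlKernel_smul_mlKernel (hθ : 0 < θ) (hσ : 0 < σ) (hτ : 0 < τ) (z : 𝕜)
    (ht : 0 < t) :
    volterraConv (rlKernel τ) (fun s => s • mlKernel θ σ z s) t =
      t • mlKernel θ (σ + τ) z t - τ • mlKernel θ (σ + τ + 1) z t := by
  have hτ1 : 0 < τ + 1 := by positivity
  have hint := volterraConvExistsAt_rlKernel_mlKernel hθ hσ hτ z ht
  have hint1 := volterraConvExistsAt_rlKernel_mlKernel hθ hσ hτ1 z ht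
  rw [add_assoc σ, ← volterraConv_rlKernel_mlKernel hθ hσ hτ z ht,
    ← volterraConv_rlKernel_mlKernel hθ hσ hτ1 z ht]
  simp only [volterraConv_eq_setIntegral _ _ ht.le, ← integral_smul]
  refine Eq.trans ?_
    (integral_sub ((hint.integrableOn ht.le).smul t) ((hint1.integrableOn ht.le).smul τ))
  refine setIntegral_congr_fun measurableSet_Ioo fun s hs => ?_
  have hmul := mul_rlKernel hτ (sub_pos.2 hs.2)
  simp only [smul_smul, ← sub_smul, ← hmul]
  ring_nf

end MittagLeffler

/-! ### The maximum principle -/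

lemma eqOn_const_of_monotoneOn_of_tendsto {M : ℝ → ℝ} {a b l m : ℝ}
    (hM : MonotoneOn M (Ioo a b)) (ha : Tendsto M (𝓝[>] a) (𝓝 l)) (hb : Tendsto M (𝓝[<] b) (𝓝 m))
    (hml : m ≤ l) : EqOn M (fun _ => l) (Ioo a b) := by
  intro c hc
  have hle : M c ≤ m := by
    refine ge_of_tendsto hb ?_
    filter_upwards [Ioo_mem_nhdsLT hc.2] with d hd
    exact hM hc ⟨hc.1.trans hd.1, hd.2⟩ hd.1.le
  have hge : l ≤ M c := by
    refine le_of_tendsto ha ?_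
    filter_upwards [Ioo_mem_nhdsGT hc.1] with d hd
    exact hM ⟨hd.1, hd.2.trans hc.2⟩ hc hd.2.le
  exact le_antisymm (hle.trans hml) hge

-- Integrating by parts, `c ↦ ∫ s in a..c, q s * u' s + q c * (u b - u c)` has derivative
-- `q' c * (u b - u c) ≥ 0`, starts from `0` and ends at a nonpositive value.
lemma eq_of_integral_mul_deriv_nonpos {q q' u u' : ℝ → ℝ} {a b : ℝ} (hab : a < b)
    (hq : ∀ s ∈ Ioo a b, HasDerivAt q (q' s) s) (hq' : ∀ s ∈ Ioo a b, 0 < q' s)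
    (hqa : Tendsto q (𝓝[>] a) (𝓝 0)) (hua : ContinuousWithinAt u (Ioi a) a)
    (hu : ∀ s ∈ Ioo a b, HasDerivAt u (u' s) s) (hu' : ContinuousOn u' (Ioo a b))
    (hmax : ∀ s ∈ Ioo a b, u s ≤ u b)
    (hqb : Tendsto (fun s => q s * (u b - u s)) (𝓝[<] b) (𝓝 0))
    (hint : IntervalIntegrable (fun s => q s * u' s) volume a b)
    (hnonpos : ∫ s in a..b, q s * u' s ≤ 0) : u a = u b := by
  set I : ℝ → ℝ := fun c => ∫ s in a..c, q s * u' s with hI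
  have hIcont : ContinuousOn I (Icc a b) := by
    simpa only [uIcc_of_le hab.le] using
      intervalIntegral.continuousOn_primitive_interval' hint left_mem_uIcc
  have hIderiv : ∀ c ∈ Ioo a b, HasDerivAt I (q c * u' c) c := fun c hc => by
    have hcont : ContinuousOn (fun s => q s * u' s) (Ioo a b) :=
      ContinuousOn.mul (fun s hs => (hq s hs).continuousAt.continuousWithinAt) hu'
    exact intervalIntegral.integral_hasDerivAt_right
      (hint.mono_set (uIcc_subset_uIcc_left (uIcc_of_le hab.le ▸ Ioo_subset_Icc_self hc)))
      (hcont.stronglyMeasurableAtFilter isOpen_Ioo c hc)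
      (hcont.continuousAt (isOpen_Ioo.mem_nhds hc))
  have hderiv : ∀ c ∈ Ioo a b,
      HasDerivAt (fun c => I c + q c * (u b - u c)) (q' c * (u b - u c)) c := fun c hc =>
    ((hIderiv c hc).add ((hq c hc).mul ((hu c hc).const_sub (u b)))).congr_deriv (by ring)
  have hmono : MonotoneOn (fun c => I c + q c * (u b - u c)) (Ioo a b) := by
    refine monotoneOn_of_hasDerivWithinAt_nonneg (f' := fun c => q' c * (u b - u c))
      (convex_Ioo a b) (fun c hc => (hderiv c hc).continuousAt.continuousWithinAt) ?_ ?_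
    all_goals rw [interior_Ioo]
    · exact fun c hc => (hderiv c hc).hasDerivWithinAt
    · exact fun c hc => mul_nonneg (hq' c hc).le (sub_nonneg.2 (hmax c hc))
  have hlima : Tendsto (fun c => I c + q c * (u b - u c)) (𝓝[>] a) (𝓝 0) := by
    have hIa : Tendsto I (𝓝[>] a) (𝓝 0) := by
      have h := (hIcont a (left_mem_Icc.2 hab.le)).mono_of_mem_nhdsWithin (Icc_mem_nhdsGT hab)
      simpa [ContinuousWithinAt, hI] using h
    simpa using hIa.add (hqa.mul (hua.tendsto.const_sub (u b)))
  have hlimb : Tendsto (fun c => I c + q c * (u b - u c)) (𝓝[<] b) (𝓝 (I b)) := by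
    have hIb := (hIcont b (right_mem_Icc.2 hab.le)).mono_of_mem_nhdsWithin (Icc_mem_nhdsLT hab)
    simpa using hIb.tendsto.add hqb
  have hconst := eqOn_const_of_monotoneOn_of_tendsto hmono hlima hlimb hnonpos
  have heq : ∀ c ∈ Ioo a b, u c = u b := fun c hc => by
    have hzero : q' c * (u b - u c) = 0 := (hderiv c hc).unique
      ((hasDerivAt_const c 0).congr_of_eventuallyEq (hconst.eventuallyEq_of_mem
        (isOpen_Ioo.mem_nhds hc)))
    linarith [(mul_eq_zero.1 hzero).resolve_left (hq' c hc).ne']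
  refine tendsto_nhds_unique hua.tendsto (tendsto_const_nhds.congr' ?_)
  filter_upwards [Ioo_mem_nhdsGT hab] with c hc using (heq c hc).symm

lemma hasDerivAt_rpow_mul_sub_rpow (θ : ℝ) {s t : ℝ} (hs : s ∈ Ioo 0 t) :
    HasDerivAt (fun s => s ^ θ * (t - s) ^ (-θ))
      (θ * s ^ (θ - 1) * (t - s) ^ (-θ) + s ^ θ * (θ * (t - s) ^ (-θ - 1))) s := by
  have hsub := ((hasDerivAt_id s).const_sub t).rpow_const (p := -θ) (Or.inl (sub_pos.2 hs.2).ne')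
  exact (Real.hasDerivAt_rpow_const (Or.inl hs.1.ne')).mul (hsub.congr_deriv (by simp))

lemma eq_of_integral_rpow_mul_sub_rpow_nonpos {θ t : ℝ} (hθ : θ ∈ Ioo 0 1) (ht : 0 < t)
    {u u' : ℝ → ℝ} (hu0 : ContinuousWithinAt u (Ioi 0) 0)
    (hu : ∀ s ∈ Ioc 0 t, HasDerivAt u (u' s) s) (hu' : ContinuousOn u' (Ioo 0 t))
    (hmax : ∀ s ∈ Ioo 0 t, u s ≤ u t)
    (hint : IntervalIntegrable (fun s => s ^ θ * (t - s) ^ (-θ) * u' s) volume 0 t)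
    (hnonpos : ∫ s in 0..t, s ^ θ * (t - s) ^ (-θ) * u' s ≤ 0) : u 0 = u t := by
  obtain ⟨hθ0, hθ1⟩ := hθ
  refine eq_of_integral_mul_deriv_nonpos ht (fun s hs => hasDerivAt_rpow_mul_sub_rpow θ hs)
    (fun s hs => ?_) ?_ hu0 (fun s hs => hu s ⟨hs.1, hs.2.le⟩) hu' hmax ?_ hint hnonpos
  · have hs0 := hs.1
    have hst := sub_pos.2 hs.2
    positivity
  · have hcont : ContinuousAt (fun s => s ^ θ * (t - s) ^ (-θ)) 0 :=
      (Real.continuousAt_rpow_const _ _ (Or.inr hθ0.le)).mul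
        (ContinuousAt.rpow_const (by fun_prop) (Or.inl (by simpa using ht.ne')))
    simpa [Real.zero_rpow hθ0.ne'] using hcont.continuousWithinAt.tendsto (s := Ioi 0)
  · have hcont : ContinuousAt (fun s => s ^ θ * (t - s) ^ (1 - θ)) t :=
      (Real.continuousAt_rpow_const _ _ (Or.inr hθ0.le)).mul
        (ContinuousAt.rpow_const (by fun_prop) (Or.inr (by linarith)))
    have hweight : Tendsto (fun s => s ^ θ * (t - s) ^ (1 - θ)) (𝓝[<] t) (𝓝 0) := by
      simpa [Real.zero_rpow (sub_pos.2 hθ1).ne'] using hcont.continuousWithinAt.tendsto (s := Iio t)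
    have hslope : Tendsto (slope u t) (𝓝[<] t) (𝓝 (u' t)) :=
      (hasDerivAt_iff_tendsto_slope.1 (hu t ⟨ht, le_rfl⟩)).mono_left
        (nhdsWithin_mono _ fun s hs => ne_of_lt hs)
    rw [← zero_mul (u' t)]
    refine (hweight.mul hslope).congr' ?_
    filter_upwards [self_mem_nhdsWithin] with s hs
    have hst : 0 < t - s := sub_pos.2 hs
    have hne : s - t ≠ 0 := (sub_neg.2 hs).ne
    rw [slope_def_field, sub_eq_neg_add 1 θ, Real.rpow_add_one hst.ne']
    field_simp
    ring

-- The hypotheses say that `N` solves the fractional equation `D^θ (s^(θ-1) N) = c * W` for a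
-- positive constant `c`; the previous lemma is applied to the component of `N` along `N t`.
lemma norm_le_of_inner_volterraConv_nonpos {E : Type*} [NormedAddCommGroup E]
    [InnerProductSpace ℝ E] [CompleteSpace E] {θ t : ℝ} (hθ : θ ∈ Ioo 0 1) (ht : 0 < t)
    {N W : ℝ → E} (hN0 : ContinuousWithinAt N (Ioi 0) 0)
    (hN : ∀ s ∈ Ioc 0 t, HasDerivAt N (s ^ (-θ) • W s) s) (hW : ContinuousOn W (Ioo 0 t))
    (hmax : ∀ s ∈ Ioo 0 t, ‖N s‖ ≤ ‖N t‖) (hint : VolterraConvExistsAt (rlKernel (1 - θ)) W t)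
    (hnonpos : inner ℝ (N t) (volterraConv (rlKernel (1 - θ)) W t) ≤ 0) : ‖N t‖ ≤ ‖N 0‖ := by
  have hΓ := Real.Gamma_pos_of_pos (sub_pos.2 hθ.2)
  let L : E →L[ℝ] ℝ := innerSL ℝ (N t)
  have hweight : EqOn (fun s => Real.Gamma (1 - θ) * L (rlKernel (1 - θ) (t - s) • W s))
      (fun s => s ^ θ * (t - s) ^ (-θ) * L (s ^ (-θ) • W s)) (Ioo 0 t) := fun s hs => by
    have hcancel : s ^ θ * s ^ (-θ) = 1 := by
      rw [← Real.rpow_add hs.1, add_neg_cancel, Real.rpow_zero]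
    simp only [map_smul, smul_eq_mul, rlKernel, sub_sub_cancel_left]
    field_simp
    linear_combination -(t - s) ^ (-θ) * L (W s) * hcancel
  have hLint : IntervalIntegrable
      (fun s => Real.Gamma (1 - θ) * L (rlKernel (1 - θ) (t - s) • W s)) volume 0 t :=
    IntervalIntegrable.const_mul ⟨L.integrable_comp hint.1, L.integrable_comp hint.2⟩ _
  have hLnonpos : ∫ s in 0..t, s ^ θ * (t - s) ^ (-θ) * L (s ^ (-θ) • W s) ≤ 0 := by
    rw [← intervalIntegral.integral_congr_Ioo_of_le ht.le hweight,
      intervalIntegral.integral_const_mul, L.intervalIntegral_comp_comm hint]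
    exact mul_nonpos_of_nonneg_of_nonpos hΓ.le hnonpos
  have hLmax : ∀ s ∈ Ioo 0 t, L (N s) ≤ L (N t) := fun s hs =>
    (real_inner_le_norm _ _).trans
      ((mul_le_mul_of_nonneg_left (hmax s hs) (norm_nonneg _)).trans_eq
        (real_inner_self_eq_norm_mul_norm _).symm)
  have heq : L (N 0) = L (N t) :=
    eq_of_integral_rpow_mul_sub_rpow_nonpos hθ ht (u := L ∘ N)
      (L.continuous.continuousAt.comp_continuousWithinAt hN0)
      (fun s hs => L.hasFDerivAt.comp_hasDerivAt s (hN s hs))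
      (L.continuous.comp_continuousOn
        ((continuousOn_id.rpow_const fun s hs => Or.inl hs.1.ne').smul hW))
      hLmax (hLint.congr_uIoo (uIoo_of_le ht.le ▸ hweight)) hLnonpos
  have hCS : ‖N t‖ * ‖N t‖ ≤ ‖N t‖ * ‖N 0‖ := by
    rw [← real_inner_self_eq_norm_mul_norm]
    exact heq.symm.trans_le (real_inner_le_norm _ _)
  rcases (norm_nonneg (N t)).eq_or_lt with hzero | hpos
  · exact hzero ▸ norm_nonneg _
  · exact le_of_mul_le_mul_left hCS hpos

section ComplexMittagLeffler

variable {θ σ t : ℝ} {z : ℂ}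

lemma mittagLeffler_rpow_smul_eq (hθ : 0 < θ) (z : ℂ) (ht : 0 < t) :
    mittagLeffler θ θ (t ^ θ • z) =
      ((Real.Gamma θ)⁻¹ : ℝ) + z * t ^ (1 - θ) • mlKernel θ (2 * θ) z t := by
  have hcancel : t ^ (1 - θ) * t ^ (θ - 1) = 1 := by
    rw [← Real.rpow_add ht, sub_add_sub_cancel, sub_self, Real.rpow_zero]
  have hleft : t ^ (1 - θ) • mlKernel θ θ z t = mittagLeffler θ θ (t ^ θ • z) := by
    rw [mlKernel, smul_smul, hcancel, one_smul]
  have hhead : t ^ (1 - θ) * rlKernel θ t = (Real.Gamma θ)⁻¹ := by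
    rw [rlKernel, mul_div_assoc', hcancel, one_div]
  rw [← hleft, mlKernel_eq_rlKernel_add hθ θ z ht, smul_add, ← two_mul, mul_smul_comm, ← hhead,
    Complex.real_smul, Complex.ofReal_mul]
  rfl

/-- The function `W` with `d/ds E_{θ,θ}(z s^θ) = s^(-θ) W(s)`. -/
noncomputable def mittagLefflerSlope (θ : ℝ) (z : ℂ) (s : ℝ) : ℂ :=
  z * ((1 - θ) • mlKernel θ (2 * θ) z s + s • mlKernel θ (2 * θ - 1) z s)

lemma hasDerivAt_mittagLeffler_rpow_smul (hθ : 1 / 2 < θ) (z : ℂ) (ht : 0 < t) :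
    HasDerivAt (fun s : ℝ => mittagLeffler θ θ (s ^ θ • z))
      (t ^ (-θ) • mittagLefflerSlope θ z t) t := by
  have hθ0 : 0 < θ := by linarith
  have hrpow : HasDerivAt (fun s : ℝ => s ^ (1 - θ)) ((1 - θ) * t ^ (-θ)) t := by
    simpa using Real.hasDerivAt_rpow_const (p := 1 - θ) (Or.inl ht.ne')
  have hker : HasDerivAt (mlKernel θ (2 * θ) z) (mlKernel θ (2 * θ - 1) z t) t := by
    simpa using hasDerivAt_mlKernel hθ0 (show 0 < 2 * θ - 1 by linarith) z ht
  refine ((((hrpow.smul hker).const_mul z).const_add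
    (((Real.Gamma θ)⁻¹ : ℝ) : ℂ)).congr_of_eventuallyEq ?_).congr_deriv ?_
  · filter_upwards [Ioi_mem_nhds ht] with s hs using mittagLeffler_rpow_smul_eq hθ0 z hs
  · rw [mittagLefflerSlope, sub_eq_neg_add 1 θ, Real.rpow_add_one ht.ne']
    simp only [Complex.real_smul]
    push_cast
    ring

lemma continuousOn_mittagLefflerSlope (hθ : 0 < θ) (z : ℂ) :
    ContinuousOn (mittagLefflerSlope θ z) (Ioi 0) :=
  continuousOn_const.mul (((continuousOn_mlKernel hθ (2 * θ) z).const_smul (1 - θ)).fun_add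
    (continuousOn_id.fun_smul (continuousOn_mlKernel hθ (2 * θ - 1) z)))

lemma volterraConv_rlKernel_mittagLefflerSlope (hθ : θ ∈ Ioo (1 / 2) 1) (z : ℂ) (ht : 0 < t) :
    VolterraConvExistsAt (rlKernel (1 - θ)) (mittagLefflerSlope θ z) t ∧
      volterraConv (rlKernel (1 - θ)) (mittagLefflerSlope θ z) t = z * t • mlKernel θ θ z t := by
  obtain ⟨hθ2, hθ1⟩ := hθ
  have hθ0 : 0 < θ := by linarith
  have hσ : 0 < 2 * θ - 1 := by linarith
  have hτ : 0 < 1 - θ := by linarith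
  have hint₁ :
      VolterraConvExistsAt (rlKernel (1 - θ)) (fun s => (1 - θ) • mlKernel θ (2 * θ) z s) t :=
    ((volterraConvExistsAt_rlKernel_mlKernel hθ0 (by positivity) hτ z ht).smul (1 - θ)).congr
      fun s _ => smul_comm _ _ _
  have hint₂ := volterraConvExistsAt_rlKernel_smul_mlKernel hθ0 hσ hτ z ht
  constructor
  · refine ((hint₁.add hint₂).const_mul z).congr fun s _ => ?_
    simp only [mittagLefflerSlope, mul_smul_comm, smul_add, mul_add]
  have hunfold : mittagLefflerSlope θ z = fun s =>
      z • ((1 - θ) • mlKernel θ (2 * θ) z s + s • mlKernel θ (2 * θ - 1) z s) := rfl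
  rw [hunfold, volterraConv_const_smul_right, volterraConv_add_right hint₁ hint₂,
    volterraConv_const_smul_right, volterraConv_rlKernel_mlKernel hθ0 (by positivity) hτ z ht,
    volterraConv_rlKernel_smul_mlKernel hθ0 hσ hτ z ht]
  ring_nf

lemma norm_mittagLeffler_le (hθ : θ ∈ Ioo (1 / 2) 1) (hz : z.re ≤ 0) :
    ‖mittagLeffler θ θ z‖ ≤ (Real.Gamma θ)⁻¹ := by
  have hθ0 : 0 < θ := one_half_pos.trans hθ.1
  let N : ℝ → ℂ := fun s => mittagLeffler θ θ (s ^ θ • z)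
  have hN : Continuous N := continuous_mittagLeffler_rpow_smul hθ0 θ z
  have hN0 : ‖N 0‖ = (Real.Gamma θ)⁻¹ := by
    simp only [N, Real.zero_rpow hθ0.ne', zero_smul, mittagLeffler_zero]
    exact Complex.norm_of_nonneg (inv_nonneg.2 (Real.Gamma_pos_of_pos hθ0).le)
  obtain ⟨t, ⟨ht0, ht1⟩, hmax⟩ := isCompact_Icc.exists_isMaxOn
    (nonempty_Icc.2 (zero_le_one' ℝ)) hN.norm.continuousOn
  have hNt : ‖N t‖ ≤ ‖N 0‖ := by
    rcases ht0.eq_or_lt with rfl | ht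
    · rfl
    obtain ⟨hint, hconv⟩ := volterraConv_rlKernel_mittagLefflerSlope hθ z ht
    refine norm_le_of_inner_volterraConv_nonpos ⟨hθ0, hθ.2⟩ ht hN.continuousWithinAt
      (fun s hs => hasDerivAt_mittagLeffler_rpow_smul hθ.1 z hs.1)
      ((continuousOn_mittagLefflerSlope hθ0 z).mono fun s hs => hs.1)
      (fun s hs => hmax ⟨hs.1.le, hs.2.le.trans ht1⟩) hint ?_
    have hpow : 0 ≤ t * t ^ (θ - 1) := by positivity
    have hinner : inner ℝ (N t) (z * t • mlKernel θ θ z t) =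
        t * t ^ (θ - 1) * Complex.normSq (N t) * z.re := by
      rw [show mlKernel θ θ z t = t ^ (θ - 1) • N t from rfl, Complex.inner, Complex.normSq_apply]
      simp only [Complex.mul_re, Complex.mul_im, Complex.smul_re, Complex.smul_im, smul_eq_mul,
        Complex.conj_re, Complex.conj_im]
      ring
    rw [hconv, hinner]
    exact mul_nonpos_of_nonneg_of_nonpos (mul_nonneg hpow (Complex.normSq_nonneg _)) hz
  calc ‖mittagLeffler θ θ z‖ = ‖N 1‖ := by simp [N]
    _ ≤ ‖N t‖ := hmax ⟨zero_le_one, le_rfl⟩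
    _ ≤ (Real.Gamma θ)⁻¹ := hN0 ▸ hNt

lemma norm_mlKernel_self_le (hθ : θ ∈ Ioo (1 / 2) 1) (hz : z.re ≤ 0) (ht : 0 ≤ t) :
    ‖mlKernel θ θ z t‖ ≤ rlKernel θ t := by
  rw [mlKernel, norm_smul, Real.norm_of_nonneg (by positivity), rlKernel, div_eq_mul_inv]
  refine mul_le_mul_of_nonneg_left (norm_mittagLeffler_le hθ ?_) (by positivity)
  rw [Complex.smul_re, smul_eq_mul]
  exact mul_nonpos_of_nonneg_of_nonpos (by positivity) hz

lemma norm_mlKernel_le (hθ : θ ∈ Ioo (1 / 2) 1) (hσ : θ ≤ σ) (hz : z.re ≤ 0) (ht : 0 < t) :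
    ‖mlKernel θ σ z t‖ ≤ rlKernel σ t := by
  have hθ0 : 0 < θ := one_half_pos.trans hθ.1
  rcases hσ.eq_or_lt with rfl | hlt
  · exact norm_mlKernel_self_le hθ hz ht.le
  obtain ⟨τ, rfl⟩ : ∃ τ, σ = θ + τ := ⟨σ - θ, by ring⟩
  have hτ : 0 < τ := by linarith
  rw [← volterraConv_rlKernel_mlKernel hθ0 hθ0 hτ z ht, ← volterraConv_rlKernel hθ0 hτ ht,
    volterraConv_eq_setIntegral _ _ ht.le, volterraConv_eq_setIntegral _ _ ht.le]
  refine norm_integral_le_of_norm_le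
    ((volterraConvExistsAt_rlKernel hθ0 hτ ht).integrableOn ht.le)
    (ae_restrict_of_forall_mem measurableSet_Ioo fun s hs => ?_)
  have hpos := rlKernel_pos hτ (sub_pos.2 hs.2)
  rw [norm_smul, Real.norm_of_nonneg hpos.le]
  exact mul_le_mul_of_nonneg_left (norm_mlKernel_self_le hθ hz hs.1.le) hpos.le

end ComplexMittagLeffler

/-! ### Kernels with a negative parameter -/

section NegativeParameter

variable {α σ a t : ℝ}

lemma mlKernel_I_mul_sqrt (hα : 0 < α) (σ : ℝ) (ha : 0 ≤ a) (ht : 0 < t) :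
    mlKernel (α / 2) σ (√a * Complex.I) t =
      ⟨mlKernel α σ (-a) t, √a * mlKernel α (σ + α / 2) (-a) t⟩ := by
  have hsq : (√a * Complex.I) ^ 2 = ((-a : ℝ) : ℂ) := by
    rw [mul_pow, Complex.I_sq, ← Complex.ofReal_pow, Real.sq_sqrt ha]
    simp
  rw [mlKernel_eq_add_mul (half_pos hα) σ _ ht, hsq, mul_div_cancel₀ α two_ne_zero]
  have hre : ∀ τ, mlKernel α τ ((-a : ℝ) : ℂ) t = ((mlKernel α τ (-a) t : ℝ) : ℂ) := fun τ =>
    (ofReal_mlKernel (𝕜 := ℂ) hα τ (-a) ht).symm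
  simp only [hre]
  apply Complex.ext <;> simp

lemma abs_mlKernel_neg_le (hα : α ∈ Ioo 1 2) (hσ : α / 2 ≤ σ) (ha : 0 ≤ a) (ht : 0 < t) :
    |mlKernel α σ (-a) t| ≤ rlKernel σ t ∧
      √a * |mlKernel α (σ + α / 2) (-a) t| ≤ rlKernel σ t := by
  obtain ⟨hα1, hα2⟩ := hα
  have hz : (√a * Complex.I).re ≤ 0 := by simp
  have hle := norm_mlKernel_le (θ := α / 2) ⟨by linarith, by linarith⟩ hσ hz ht
  rw [mlKernel_I_mul_sqrt (by linarith) σ ha ht] at hle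
  constructor
  · exact (Complex.abs_re_le_norm _).trans hle
  · simpa [abs_mul, abs_of_nonneg (Real.sqrt_nonneg a)] using (Complex.abs_im_le_norm _).trans hle

lemma mul_mlKernel_neg (hα : 0 < α) (σ a : ℝ) (ht : 0 < t) :
    a * mlKernel α (σ + α) (-a) t = rlKernel σ t - mlKernel α σ (-a) t := by
  have h := mlKernel_eq_rlKernel_add hα σ (-a) ht
  rw [RCLike.ofReal_real_eq_id, id] at h
  linarith

lemma mlKernel_neg_nonneg (hα : α ∈ Ioo 1 2) (hσ : α / 2 ≤ σ) (ha : 0 < a) (ht : 0 < t) :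
    0 ≤ mlKernel α (σ + α) (-a) t := by
  have hle := (abs_le.1 (abs_mlKernel_neg_le hα hσ ha.le ht).1).2
  have hmul := mul_mlKernel_neg (one_pos.trans hα.1) σ a ht
  exact nonneg_of_mul_nonneg_right (hmul ▸ sub_nonneg.2 hle) ha

lemma mul_abs_mlKernel_neg_le (hα : α ∈ Ioo 1 2) (hσ : α / 2 ≤ σ) (ha : 0 < a) (ht : 0 < t) :
    a * |mlKernel α (σ + α) (-a) t| ≤ 2 * rlKernel σ t := by
  have hle := (abs_le.1 (abs_mlKernel_neg_le hα hσ ha.le ht).1).1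
  rw [abs_of_nonneg (mlKernel_neg_nonneg hα hσ ha ht),
    mul_mlKernel_neg (one_pos.trans hα.1) σ a ht]
  linarith

end NegativeParameter

/-! ### The Caputo equation -/

section Caputo

variable {α β z t : ℝ} {w : ℝ → ℝ}

lemma rlInt_one_deriv_sub (hw : ContDiff ℝ 1 w) (t : ℝ) :
    rlInt 1 (fun s => deriv w s - deriv w 0) t = w t - deriv w 0 * t - w 0 := by
  have hint := hw.continuous_deriv_one.intervalIntegrable (μ := volume) 0 t
  rw [rlInt_one_apply, intervalIntegral.integral_sub hint intervalIntegrable_const,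
    intervalIntegral.integral_deriv_eq_sub
      (fun s _ => (hw.differentiable one_ne_zero).differentiableAt) hint,
    intervalIntegral.integral_const, sub_zero, smul_eq_mul]
  ring

lemma capKernel_eq_integral (hα : α < 2) (hw : ContDiff ℝ 1 w) (ht : 0 ≤ t) :
    capKernel α w t = ∫ s in (0 : ℝ)..t, rlInt (2 - α) (fun s => deriv w s - deriv w 0) s := by
  have hderiv : ContinuousOn (fun s => deriv w s - deriv w 0) (Ici 0) :=
    (hw.continuous_deriv_one.sub continuous_const).continuousOn
  have hα' : 0 < 2 - α := sub_pos.2 hα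
  rw [capKernel, if_neg hα.ne, ← funext (rlInt_one_deriv_sub hw), rlInt_rlInt hα' one_pos hderiv ht,
    ← rlInt_one_apply, rlInt_rlInt one_pos hα' hderiv ht, add_comm]

lemma deriv_capKernel (hα : α < 2) (hw : ContDiff ℝ 1 w) (ht : 0 ≤ t)
    (hdiff : DifferentiableAt ℝ (capKernel α w) t) :
    deriv (capKernel α w) t = rlInt (2 - α) (fun s => deriv w s - deriv w 0) t := by
  have hcont : ContinuousOn (rlInt (2 - α) fun s => deriv w s - deriv w 0) (Ici 0) :=
    continuousOn_rlInt (sub_pos.2 hα) (hw.continuous_deriv_one.sub continuous_const)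
  have hcont' := hcont.mono (Ioi_subset_Ici ht)
  have hFTC := intervalIntegral.integral_hasDerivWithinAt_right (s := Ici t) (t := Ioi t)
    ((hcont.mono Icc_subset_Ici_self).intervalIntegrable_of_Icc ht)
    (hcont'.stronglyMeasurableAtFilter_nhdsWithin measurableSet_Ioi t)
    ((hcont t ht).mono (Ioi_subset_Ici ht))
  exact (uniqueDiffWithinAt_Ici t).eq_deriv _ hdiff.hasDerivAt.hasDerivWithinAt
    (hFTC.congr (fun s hs => capKernel_eq_integral hα hw (ht.trans hs))
      (capKernel_eq_integral hα hw ht))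

lemma rlInt_one_caputoD (hα : α < 2) (hw : ContDiff ℝ 1 w) (ht : 0 ≤ t)
    (hAC : AC2On (capKernel α w) t) :
    rlInt 1 (caputoD α w) t = rlInt (2 - α) (fun s => deriv w s - deriv w 0) t := by
  obtain ⟨hdiff, -, hint⟩ := hAC
  have hzero : deriv (capKernel α w) 0 = 0 := by
    rw [deriv_capKernel hα hw le_rfl (hdiff 0 ⟨le_rfl, ht⟩)]
    simp [rlInt]
  rw [rlInt_one_apply, ← deriv_capKernel hα hw ht (hdiff t ⟨ht, le_rfl⟩), hint t ⟨ht, le_rfl⟩,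
    hzero, zero_add]
  rfl

lemma volterraConv_mlKernel_rlKernel {θ σ τ : ℝ} (hθ : 0 < θ) (hσ : 0 < σ) (hτ : 0 < τ) (z : ℝ)
    (ht : 0 < t) : volterraConv (mlKernel θ σ z) (rlKernel τ) t = mlKernel θ (σ + τ) z t := by
  rw [volterraConv_comm, volterraConv_rlKernel_mlKernel hθ hσ hτ z ht]

-- With `K_σ = mlKernel α σ z`, `k_σ = rlKernel σ` and `v = w' - w'(0)`, this is the chain
-- `K_{β+α} * D^α w = K_{β+α-1} * (k_1 * D^α w) = K_{β+α-1} * (k_{2-α} * v) = K_{β+1} * v`.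
lemma volterraConv_mlKernel_caputoD (hα1 : 1 ≤ α) (hα2 : α < 2) (hβ : 0 < β) (z : ℝ)
    (hw : ContDiff ℝ 1 w) (hAC : ∀ T > 0, AC2On (capKernel α w) T) (ht : 0 < t) :
    volterraConv (mlKernel α (β + α) z) (caputoD α w) t =
      volterraConv (mlKernel α β z) (fun s => w s - deriv w 0 * s - w 0) t := by
  have hα0 : 0 < α := by linarith
  have hσ : 0 < β + α - 1 := by linarith
  have hα' : 0 < 2 - α := by linarith
  set v : ℝ → ℝ := fun s => deriv w s - deriv w 0
  have hv : ContinuousOn v (Icc 0 t) :=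
    (hw.continuous_deriv_one.sub continuous_const).continuousOn
  have hK : ∀ σ > 0, IntervalIntegrable (mlKernel α σ z) volume 0 t := fun σ hσ =>
    intervalIntegrable_mlKernel hα0 hσ z 0 t
  have hk : ∀ σ > 0, IntervalIntegrable (rlKernel σ) volume 0 t := fun σ hσ =>
    intervalIntegrable_rlKernel hσ 0 t
  calc volterraConv (mlKernel α (β + α) z) (caputoD α w) t
      = volterraConv (volterraConv (rlKernel 1) (mlKernel α (β + α - 1) z)) (caputoD α w) t :=
        volterraConv_congr ht.le (fun s hs => by
          rw [volterraConv_rlKernel_mlKernel hα0 hσ one_pos z hs.1, sub_add_cancel]) fun _ _ => rfl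
    _ = volterraConv (mlKernel α (β + α - 1) z) (rlInt 1 (caputoD α w)) t := by
        rw [rlInt_eq_volterraConv]
        exact volterraConv_left_comm (k := rlKernel 1) (g := caputoD α w) ht.le
          (continuousOn_const.congr fun s _ => rlKernel_one) (hK _ hσ) (hAC t ht).2.1
    _ = volterraConv (mlKernel α (β + α - 1) z) (volterraConv (rlKernel (2 - α)) v) t := by
        rw [← rlInt_eq_volterraConv]
        exact volterraConv_congr ht.le (fun _ _ => rfl) fun s hs =>
          rlInt_one_caputoD hα2 hw hs.1.le (hAC s hs.1)
    _ = volterraConv (volterraConv (mlKernel α (β + α - 1) z) (rlKernel (2 - α))) v t :=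
        volterraConv_assoc ht.le (hK _ hσ) (hk _ hα') hv
    _ = volterraConv (volterraConv (mlKernel α β z) (rlKernel 1)) v t :=
        volterraConv_congr ht.le (fun s hs => by
          rw [volterraConv_mlKernel_rlKernel hα0 hσ hα' z hs.1,
            volterraConv_mlKernel_rlKernel hα0 hβ one_pos z hs.1]
          ring_nf) fun _ _ => rfl
    _ = volterraConv (mlKernel α β z) (rlInt 1 v) t := by
        rw [rlInt_eq_volterraConv, volterraConv_assoc ht.le (hK _ hβ) (hk _ one_pos) hv]
    _ = volterraConv (mlKernel α β z) (fun s => w s - deriv w 0 * s - w 0) t := by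
        rw [funext (rlInt_one_deriv_sub hw)]

lemma rlInt_eq_volterraConv_mlKernel_sub (hα : 0 < α) (hβ : 0 < β) (z : ℝ)
    (hw : ContinuousOn w (Icc 0 t)) (ht : 0 ≤ t) :
    rlInt β w t =
      volterraConv (mlKernel α β z) w t - z * volterraConv (mlKernel α (β + α) z) w t := by
  have hK : ∀ σ > 0, VolterraConvExistsAt w (mlKernel α σ z) t := fun σ hσ =>
    (VolterraConvExistsAt.of_continuousOn_right ht (intervalIntegrable_mlKernel hα hσ z 0 t)
      hw).symm
  have hk : EqOn (rlKernel β) (fun s => mlKernel α β z s + (-z) • mlKernel α (β + α) z s)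
      (Ioo 0 t) := fun s hs => by
    simp only [mlKernel_eq_rlKernel_add hα β z hs.1, RCLike.ofReal_real_eq_id, id, smul_eq_mul]
    ring
  rw [rlInt_eq_volterraConv, volterraConv_comm, volterraConv_congr ht (eqOn_refl w _) hk,
    volterraConv_add_const_smul_right (-z) (hK β hβ) (hK (β + α) (by positivity)),
    volterraConv_comm w, volterraConv_comm w, neg_smul, smul_eq_mul, sub_eq_add_neg]

lemma volterraConv_mlKernel_sub_initial (hα : 0 < α) (hβ : 0 < β) (z : ℝ) (x y : ℝ)
    (hw : ContinuousOn w (Icc 0 t)) (ht : 0 < t) :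
    volterraConv (mlKernel α β z) (fun s => w s - y * s - x) t =
      volterraConv (mlKernel α β z) w t - y * mlKernel α (β + 2) z t -
        x * mlKernel α (β + 1) z t := by
  have hK : ∀ g : ℝ → ℝ, ContinuousOn g (Icc 0 t) → VolterraConvExistsAt (mlKernel α β z) g t :=
    fun g hg => .of_continuousOn_right ht.le (intervalIntegrable_mlKernel hα hβ z 0 t) hg
  have hsplit : EqOn (fun s => w s - y * s - x)
      (fun s => (w s + (-y) • rlKernel 2 s) + (-x) • rlKernel 1 s) (Ioo 0 t) := fun s _ => by
    simp only [rlKernel_one, rlKernel_two, smul_eq_mul]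
    ring
  have h1 : ContinuousOn (rlKernel 1) (Icc 0 t) := continuousOn_const.congr fun _ _ => rlKernel_one
  have h2 : ContinuousOn (rlKernel 2) (Icc 0 t) := continuousOn_id.congr fun _ _ => rlKernel_two
  rw [volterraConv_congr ht.le (eqOn_refl _ _) hsplit,
    volterraConv_add_const_smul_right (g := fun s => w s + (-y) • rlKernel 2 s) (-x)
      (hK _ (hw.add (h2.const_smul (-y)))) (hK _ h1),
    volterraConv_add_const_smul_right (-y) (hK _ hw) (hK _ h2),
    volterraConv_mlKernel_rlKernel hα hβ one_pos z ht,
    volterraConv_mlKernel_rlKernel hα hβ two_pos z ht]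
  simp only [smul_eq_mul]
  ring

lemma rlInt_eq_volterraConv_caputoD_sub_add (hα1 : 1 ≤ α) (hα2 : α < 2) (hβ : 0 < β) (z : ℝ)
    (hw : ContDiff ℝ 1 w) (hAC : ∀ T > 0, AC2On (capKernel α w) T) (ht : 0 < t) :
    rlInt β w t = volterraConv (mlKernel α (β + α) z) (fun s => caputoD α w s - z * w s) t +
      w 0 * mlKernel α (β + 1) z t + deriv w 0 * mlKernel α (β + 2) z t := by
  have hα : 0 < α := by linarith
  have hwc := hw.continuous.continuousOn (s := Icc 0 t)
  have hK : Continuous (mlKernel α (β + α) z) := continuous_mlKernel hα (by linarith) z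
  have hD : VolterraConvExistsAt (mlKernel α (β + α) z) (caputoD α w) t :=
    (VolterraConvExistsAt.of_continuousOn_right ht.le (hAC t ht).2.1 hK.continuousOn).symm
  have hKw : VolterraConvExistsAt (mlKernel α (β + α) z) w t :=
    .of_continuousOn_right ht.le (hK.intervalIntegrable 0 t) hwc
  have hlin := volterraConv_add_const_smul_right (-z) hD hKw
  simp only [smul_eq_mul, neg_mul, ← sub_eq_add_neg] at hlin
  rw [hlin, volterraConv_mlKernel_caputoD hα1 hα2 hβ z hw hAC ht,
    volterraConv_mlKernel_sub_initial hα hβ z _ _ hwc ht,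
    rlInt_eq_volterraConv_mlKernel_sub hα hβ z hwc ht.le]
  ring

end Caputo

/-! ### Lower bounds at infinity -/

section LowerBounds

open Asymptotics

lemma min_mul_rpow_le {s x : ℝ} (e : ℝ) (hs : 0 < s) (hsx : s / 2 ≤ x) (hxs : x ≤ s) :
    min 1 ((1 / 2 : ℝ) ^ e) * s ^ e ≤ x ^ e := by
  have hx : 0 < x := by linarith
  rcases le_total 0 e with he | he
  · calc min 1 ((1 / 2 : ℝ) ^ e) * s ^ e ≤ (1 / 2 : ℝ) ^ e * s ^ e := by
          gcongr
          exact min_le_right _ _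
      _ = (1 / 2 * s) ^ e := (Real.mul_rpow (by norm_num) hs.le).symm
      _ ≤ x ^ e := Real.rpow_le_rpow (by positivity) (by linarith) he
  · calc min 1 ((1 / 2 : ℝ) ^ e) * s ^ e ≤ 1 * s ^ e := by
          gcongr
          exact min_le_left _ _
      _ ≤ x ^ e := by
          rw [one_mul]
          exact Real.rpow_le_rpow_of_nonpos hx hxs he

lemma isLittleO_rpow_rpow {d e : ℝ} (hde : d < e) :
    (fun t : ℝ => t ^ d) =o[atTop] fun t => t ^ e := by
  refine isLittleO_of_tendsto' ?_ ?_
  · filter_upwards [eventually_gt_atTop 0] with t ht h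
    exact absurd h (Real.rpow_pos_of_pos ht e).ne'
  · refine (tendsto_rpow_neg_atTop (sub_pos.2 hde)).congr' ?_
    filter_upwards [eventually_gt_atTop 0] with t ht
    rw [neg_sub, Real.rpow_sub ht]

lemma exists_eventually_mul_le_add {ι : Type*} {l : Filter ι} {φ F r : ι → ℝ}
    (hφ : 0 ≤ᶠ[l] φ) (hF : ∃ c > 0, ∀ᶠ t in l, c * φ t ≤ F t) (hr : r =o[l] φ) :
    ∃ c > 0, ∀ᶠ t in l, c * φ t ≤ F t + r t := by
  obtain ⟨c, hc, hF⟩ := hF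
  refine ⟨c / 2, half_pos hc, ?_⟩
  filter_upwards [hφ, hF, hr.bound (half_pos hc)] with t hφt hFt hrt
  rw [Real.norm_of_nonneg hφt] at hrt
  linarith [(abs_le.1 hrt).1]

lemma mul_integral_le_volterraConv {K g : ℝ → ℝ} {m r t : ℝ} (hr : 0 ≤ r) (hrt : r ≤ t)
    (hK : ∀ s > 0, 0 ≤ K s) (hKint : IntervalIntegrable K volume 0 r)
    (hKg : VolterraConvExistsAt K g t) (hg : ∀ᵐ s, s ∈ Ioo 0 t → 0 ≤ g s)
    (hgm : ∀ᵐ s, s ∈ Ioo (t - r) t → m ≤ g s) :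
    m * ∫ s in (0 : ℝ)..r, K s ≤ volterraConv K g t := by
  have hsub : Ioo (t - r) t ⊆ Ioo 0 t := Ioo_subset_Ioo_left (sub_nonneg.2 hrt)
  have hKg' := hKg.integrableOn (hr.trans hrt)
  have hKshift : IntegrableOn (fun s => m * K (t - s)) (Ioo (t - r) t) := by
    have h := (hKint.comp_sub_left t).symm
    rw [sub_zero, intervalIntegrable_iff_integrableOn_Ioo_of_le (sub_le_self t hr)] at h
    exact h.const_mul m
  calc m * ∫ s in (0 : ℝ)..r, K s = ∫ s in Ioo (t - r) t, m * K (t - s) := by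
        rw [← integral_Ioc_eq_integral_Ioo, ← intervalIntegral.integral_of_le (sub_le_self t hr),
          intervalIntegral.integral_const_mul, intervalIntegral.integral_comp_sub_left, sub_self,
          sub_sub_cancel]
    _ ≤ ∫ s in Ioo (t - r) t, K (t - s) • g s := by
        refine setIntegral_mono_on_ae hKshift (hKg'.mono_set hsub) measurableSet_Ioo ?_
        filter_upwards [hgm] with s hgm hs
        rw [mul_comm, smul_eq_mul]
        exact mul_le_mul_of_nonneg_left (hgm hs) (hK _ (sub_pos.2 hs.2))
    _ ≤ ∫ s in Ioo 0 t, K (t - s) • g s := by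
        refine setIntegral_mono_set hKg' ?_ hsub.eventuallyLE
        rw [EventuallyLE, ae_restrict_iff' measurableSet_Ioo]
        filter_upwards [hg] with s hg hs
        exact mul_nonneg (hK _ (sub_pos.2 hs.2)) (hg hs)
    _ = volterraConv K g t := (volterraConv_eq_setIntegral K g (hr.trans hrt)).symm

-- Only the contribution of `t / 2 < s < t` to the convolution is kept.
lemma exists_mul_rpow_le_volterraConv {K g : ℝ → ℝ} {d e : ℝ} (hK : ∀ s > 0, 0 ≤ K s)
    (hKint : ∀ t > 0, IntervalIntegrable K volume 0 t)
    (hKg : ∀ t > 0, VolterraConvExistsAt K g t) (hg : ∀ᵐ s, 0 < s → 0 ≤ g s)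
    (hglow : ∃ c > 0, ∀ᶠ s in atTop ⊓ ae volume, c * s ^ d ≤ g s)
    (hKlow : ∃ c > 0, ∀ᶠ t in atTop, c * t ^ e ≤ ∫ s in (0 : ℝ)..t, K s) :
    ∃ c > 0, ∀ᶠ t in atTop, c * t ^ (d + e) ≤ volterraConv K g t := by
  obtain ⟨c, hc, hglow⟩ := hglow
  obtain ⟨c', hc', hKlow⟩ := hKlow
  obtain ⟨A, hA, B, hB, hAB⟩ := eventually_inf.1 hglow
  obtain ⟨T, hT⟩ := mem_atTop_sets.1 hA
  refine ⟨c * min 1 ((1 / 2 : ℝ) ^ d) * (c' * (1 / 2) ^ e), by positivity, ?_⟩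
  have hhalf : Tendsto (fun t : ℝ => t / 2) atTop atTop := tendsto_id.atTop_div_const two_pos
  filter_upwards [eventually_gt_atTop 0, hhalf.eventually_ge_atTop T, hhalf.eventually hKlow]
    with t ht htT hKt
  have hgt : ∀ᵐ s, s ∈ Ioo (t - t / 2) t → c * (min 1 ((1 / 2 : ℝ) ^ d) * t ^ d) ≤ g s := by
    filter_upwards [hB] with s hsB hs
    have hst : t / 2 ≤ s := by linarith [hs.1]
    exact (mul_le_mul_of_nonneg_left (min_mul_rpow_le d ht hst hs.2.le) hc.le).trans
      (hAB s ⟨hT s (htT.trans hst), hsB⟩)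
  calc c * min 1 ((1 / 2 : ℝ) ^ d) * (c' * (1 / 2) ^ e) * t ^ (d + e)
      = c * (min 1 ((1 / 2 : ℝ) ^ d) * t ^ d) * (c' * (t / 2) ^ e) := by
        rw [Real.rpow_add ht, ← one_div_mul_eq_div 2 t, Real.mul_rpow one_half_pos.le ht.le]
        ring
    _ ≤ c * (min 1 ((1 / 2 : ℝ) ^ d) * t ^ d) * ∫ s in (0 : ℝ)..t / 2, K s := by gcongr
    _ ≤ volterraConv K g t :=
        mul_integral_le_volterraConv (half_pos ht).le (half_le_self ht.le) hK
          (hKint _ (half_pos ht)) (hKg t ht) (hg.mono fun s h hs => h hs.1) hgt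

lemma exists_mul_rpow_le_rlInt {γ : ℝ} (hγ : 0 < γ) {f : ℝ → ℝ} (hf : Continuous f)
    (hf0 : ∀ t, 0 ≤ t → 0 ≤ f t) (hft : ∃ t, 0 ≤ t ∧ f t ≠ 0) :
    ∃ c > 0, ∀ᶠ t in atTop, c * t ^ (γ - 1) ≤ rlInt γ f t := by
  obtain ⟨t₀, ht₀, hft₀⟩ := hft
  have hpos : 0 < ∫ s in (0 : ℝ)..t₀ + 1, f s :=
    intervalIntegral.integral_pos (by linarith) hf.continuousOn (fun s hs => hf0 s hs.1.le)
      ⟨t₀, ⟨ht₀, by linarith⟩, (hf0 t₀ ht₀).lt_of_ne' hft₀⟩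
  have hklow : ∀ᶠ s in atTop ⊓ ae volume,
      1 / Real.Gamma γ * s ^ (γ - 1) ≤ rlKernel γ s :=
    Eventually.of_forall fun s => (one_div_mul_eq_div _ _).le
  have hflow : ∀ᶠ t in atTop,
      (∫ s in (0 : ℝ)..t₀ + 1, f s) * t ^ (0 : ℝ) ≤ ∫ s in (0 : ℝ)..t, f s := by
    filter_upwards [eventually_ge_atTop (t₀ + 1)] with t ht
    rw [Real.rpow_zero, mul_one]
    refine intervalIntegral.integral_mono_interval le_rfl (by linarith) ht ?_
      (hf.intervalIntegrable 0 t)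
    filter_upwards [self_mem_ae_restrict measurableSet_Ioc] with s hs using hf0 s hs.1.le
  have hlow := exists_mul_rpow_le_volterraConv (fun s hs => hf0 s hs.le)
    (fun t _ => hf.intervalIntegrable 0 t)
    (fun t ht => (VolterraConvExistsAt.of_continuousOn_right ht.le
      (intervalIntegrable_rlKernel hγ 0 t) hf.continuousOn).symm)
    (ae_of_all _ fun s hs => (rlKernel_pos hγ hs).le)
    ⟨_, one_div_pos.2 (Real.Gamma_pos_of_pos hγ), hklow⟩ ⟨_, hpos, hflow⟩
  rwa [add_zero, volterraConv_comm, ← rlInt_eq_volterraConv] at hlow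

lemma isBigO_rlKernel (σ : ℝ) (l : Filter ℝ) : rlKernel σ =O[l] fun t => t ^ (σ - 1) :=
  ((isBigO_refl (fun t : ℝ => t ^ (σ - 1)) l).const_mul_left (1 / Real.Gamma σ)).congr_left
    fun _ => one_div_mul_eq_div _ _

variable {α β σ a : ℝ}

lemma isBigO_mlKernel_neg (hα : α ∈ Ioo 1 2) (hσ : α / 2 ≤ σ) (ha : 0 < a) :
    mlKernel α (σ + α) (-a) =O[atTop] fun t => t ^ (σ - 1) := by
  refine IsBigO.trans (.of_bound (2 / a) ?_) (isBigO_rlKernel σ atTop)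
  filter_upwards [eventually_gt_atTop 0] with t ht
  have hk := (rlKernel_pos ((half_pos (one_pos.trans hα.1)).trans_le hσ) ht).le
  rw [Real.norm_eq_abs, Real.norm_of_nonneg hk, div_mul_eq_mul_div, le_div_iff₀' ha]
  exact mul_abs_mlKernel_neg_le hα hσ ha ht

lemma isBigO_mlKernel_neg_half (hα : α ∈ Ioo 1 2) (hσ : α / 2 ≤ σ) (ha : 0 < a) :
    mlKernel α (σ + α / 2) (-a) =O[atTop] fun t => t ^ (σ - 1) := by
  refine IsBigO.trans (.of_bound (1 / √a) ?_) (isBigO_rlKernel σ atTop)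
  filter_upwards [eventually_gt_atTop 0] with t ht
  have hk := (rlKernel_pos ((half_pos (one_pos.trans hα.1)).trans_le hσ) ht).le
  rw [Real.norm_eq_abs, Real.norm_of_nonneg hk, div_mul_eq_mul_div, one_mul,
    le_div_iff₀' (Real.sqrt_pos.2 ha)]
  exact (abs_mlKernel_neg_le hα hσ ha.le ht).2

lemma exists_mul_rpow_le_integral_mlKernel (hα : α ∈ Ioo 1 2) (hβ : α / 2 ≤ β) (ha : 0 < a) :
    ∃ c > 0, ∀ᶠ t in atTop, c * t ^ β ≤ ∫ s in (0 : ℝ)..t, mlKernel α (β + α) (-a) s := by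
  have hα0 : 0 < α := one_pos.trans hα.1
  have hβ0 : 0 < β := (half_pos hα0).trans_le hβ
  have hK : mlKernel α (β + 1) (-a) =o[atTop] fun t => t ^ β := by
    have h := isBigO_mlKernel_neg_half (σ := β + 1 - α / 2) hα (by linarith [hα.2]) ha
    rw [sub_add_cancel] at h
    exact h.trans_isLittleO (isLittleO_rpow_rpow (by linarith))
  have hk : ∀ t : ℝ, 1 / Real.Gamma (β + 1) * t ^ β = rlKernel (β + 1) t := fun t => by
    rw [rlKernel, add_sub_cancel_right, one_div_mul_eq_div]
  obtain ⟨c, hc, hlow⟩ := exists_eventually_mul_le_add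
    ((eventually_ge_atTop 0).mono fun t ht => Real.rpow_nonneg ht β)
    ⟨_, one_div_pos.2 (Real.Gamma_pos_of_pos (by positivity)),
      Eventually.of_forall fun t => (hk t).le⟩ hK.neg_left
  refine ⟨c / a, div_pos hc ha, ?_⟩
  filter_upwards [hlow, eventually_gt_atTop 0] with t hlow ht
  rw [← rlInt_one_apply, rlInt_eq_volterraConv,
    volterraConv_rlKernel_mlKernel hα0 (by positivity) one_pos (-a) ht, div_mul_eq_mul_div,
    div_le_iff₀' ha, add_right_comm, mul_mlKernel_neg hα0 _ a ht]
  exact hlow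

end LowerBounds

section Comparison

open Asymptotics

variable {α β γ a : ℝ} {w f : ℝ → ℝ}

lemma exists_mul_rpow_le_volterraConv_mlKernel (hα : α ∈ Ioo 1 2) (hβ : α / 2 ≤ β) (hγ : 0 < γ)
    (ha : 0 < a) (hf : Continuous f) (hf0 : ∀ t, 0 ≤ t → 0 ≤ f t) (hft : ∃ t, 0 ≤ t ∧ f t ≠ 0)
    {g : ℝ → ℝ} (hg : ∀ t > 0, IntervalIntegrable g volume 0 t)
    (hfg : ∀ᵐ t ∂(volume.restrict (Ici (0 : ℝ))), rlInt γ f t ≤ g t) :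
    ∃ c > 0, ∀ᶠ t in atTop, c * t ^ (γ + β - 1) ≤ volterraConv (mlKernel α (β + α) (-a)) g t := by
  have hK : Continuous (mlKernel α (β + α) (-a)) :=
    continuous_mlKernel (one_pos.trans hα.1) (by linarith [hα.1]) (-a)
  rw [ae_restrict_iff' measurableSet_Ici] at hfg
  obtain ⟨c, hc, hlow⟩ := exists_mul_rpow_le_rlInt hγ hf hf0 hft
  have hglow : ∀ᶠ t in atTop ⊓ ae volume, c * t ^ (γ - 1) ≤ g t := by
    filter_upwards [hlow.filter_mono inf_le_left, hfg.filter_mono inf_le_right,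
      (eventually_ge_atTop 0).filter_mono inf_le_left] with t hlow hfg ht using hlow.trans (hfg ht)
  rw [show γ + β - 1 = γ - 1 + β by ring]
  exact exists_mul_rpow_le_volterraConv (fun s hs => mlKernel_neg_nonneg hα hβ ha hs)
    (fun t _ => hK.intervalIntegrable 0 t)
    (fun t ht => (VolterraConvExistsAt.of_continuousOn_right ht.le (hg t ht) hK.continuousOn).symm)
    (hfg.mono fun t h ht => (rlInt_nonneg hγ hf0 ht.le).trans (h ht.le)) ⟨c, hc, hglow⟩
    (exists_mul_rpow_le_integral_mlKernel hα hβ ha)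

-- `α + γ > 2` is what makes the slope at `0` negligible: its contribution is `O(t ^ (β + 1 - α))`.
lemma isLittleO_initial_mlKernel (hα : α ∈ Ioo 1 2) (hβ : α / 2 ≤ β) (hαγ : 2 < α + γ) (ha : 0 < a)
    (x y : ℝ) :
    (fun t => x * mlKernel α (β + 1) (-a) t + y * mlKernel α (β + 2) (-a) t) =o[atTop]
      fun t => t ^ (γ + β - 1) := by
  obtain ⟨hα1, hα2⟩ := hα
  have h1 := isBigO_mlKernel_neg_half (σ := β + 1 - α / 2) ⟨hα1, hα2⟩ (by linarith) ha
  have h2 := isBigO_mlKernel_neg (σ := β + 2 - α) ⟨hα1, hα2⟩ (by linarith) ha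
  rw [sub_add_cancel] at h1 h2
  exact ((h1.trans_isLittleO (isLittleO_rpow_rpow (by linarith))).const_mul_left x).add
    ((h2.trans_isLittleO (isLittleO_rpow_rpow (by linarith))).const_mul_left y)

lemma liminf_rpow_neg_mul_pos {u : ℝ → ℝ} {e : ℝ}
    (hu : ∃ c > 0, ∀ᶠ t in atTop, c * t ^ e ≤ u t) :
    0 < liminf (fun t : ℝ => ((t ^ (-e) * u t : ℝ) : EReal)) atTop := by
  obtain ⟨c, hc, hu⟩ := hu
  refine (EReal.coe_pos.2 hc).trans_le (le_liminf_of_le (by isBoundedDefault) ?_)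
  filter_upwards [hu, eventually_gt_atTop 0] with t hut ht
  rwa [EReal.coe_le_coe_iff, Real.rpow_neg ht.le, ← div_eq_inv_mul,
    le_div_iff₀ (Real.rpow_pos_of_pos ht e)]

theorem cor_liminf_pos_v_general (hα1 : 1 < α) (hα2 : α < 2) (ha : 0 < a)
    (hw : ContDiff ℝ 1 w) (hf : Continuous f) (hf0 : ∀ t, 0 ≤ t → 0 ≤ f t)
    (hft : ∃ t, 0 ≤ t ∧ f t ≠ 0) (hAC : ∀ T > 0, AC2On (capKernel α w) T)
    (hineq : ∀ᵐ t ∂(volume.restrict (Ici (0 : ℝ))), rlInt γ f t ≤ caputoD α w t + a * w t)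
    (hβ : α / 2 ≤ β) (hαγ : 2 < α + γ) :
    0 < liminf (fun t : ℝ => ((t ^ (1 - γ - β) * rlInt β w t : ℝ) : EReal)) atTop := by
  have hγ : 0 < γ := by linarith
  have hg : ∀ t > 0, IntervalIntegrable (fun s => caputoD α w s + a * w s) volume 0 t :=
    fun t ht => (hAC t ht).2.1.add ((hw.continuous.const_mul a).intervalIntegrable 0 t)
  have hforcing := exists_mul_rpow_le_volterraConv_mlKernel ⟨hα1, hα2⟩ hβ hγ ha hf hf0 hft hg hineq
  have hinitial := isLittleO_initial_mlKernel ⟨hα1, hα2⟩ hβ hαγ ha (w 0) (deriv w 0)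
  obtain ⟨c, hc, hlow⟩ := exists_eventually_mul_le_add
    ((eventually_ge_atTop 0).mono fun t ht => Real.rpow_nonneg ht _) hforcing hinitial
  rw [show 1 - γ - β = -(γ + β - 1) by ring]
  refine liminf_rpow_neg_mul_pos ⟨c, hc, ?_⟩
  filter_upwards [hlow, eventually_gt_atTop 0] with t hlow ht
  rw [rlInt_eq_volterraConv_caputoD_sub_add hα1.le hα2 (by linarith) (-a) hw hAC ht, add_assoc]
  simpa only [neg_mul, sub_neg_eq_add] using hlow

end Comparison

/-- Corollary 2.5 (v): for β ∈ [α/2, α), if α+γ > 2 then liminf t^{1−γ−β} (₀I_t^β w)(t) > 0. -/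
theorem cor_liminf_pos_v
    (γ α p a b : ℝ) (w : ℝ → ℝ)
    (hγ : 0 < γ) (hα1 : 1 < α) (hα2 : α < 2) (hp : 1 < p) (ha : 0 < a) (hb : 0 < b)
    (hw : ContDiff ℝ 1 w)
    (hw0 : ∃ t : ℝ, 0 ≤ t ∧ w t ≠ 0)
    (hAC : ∀ T > (0:ℝ), AC2On (capKernel α w) T)
    (hineq : ∀ᵐ t ∂(volume.restrict (Set.Ici (0:ℝ))),
      caputoD α w t + a * w t ≥ b * rlInt γ (fun s => |w s| ^ p) t)
    (β : ℝ) (hβ1 : α / 2 ≤ β) (hβ2 : β < α) (hαγ : 2 < α + γ) :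
    0 < liminf (fun t : ℝ => ((t ^ (1 - γ - β) * rlInt β w t : ℝ) : EReal)) atTop := by
  have hf : Continuous fun s => b * |w s| ^ p :=
    continuous_const.mul (hw.continuous.abs.rpow_const fun _ => Or.inr (zero_le_one.trans hp.le))
  refine cor_liminf_pos_v_general hα1 hα2 ha hw hf (fun t _ => by positivity)
    (hw0.imp fun t ⟨ht, hwt⟩ => ⟨ht, by positivity⟩) hAC ?_ hβ1 hαγ
  rwa [rlInt_const_mul]
end

section
/- Let γ > 0, p > 1, a > 0, b > 0. Suppose w is twice continuously differentiable on [0,∞), w ≢ 0, and for almost every t ≥ 0, w''(t) + a·w(t) ≥ b·(₀I_t^γ (|w|^p))(t). Then liminf_{t→+∞} |w(t)| = 0, and liminf_{t→+∞} t^{min{(1+γ)/p, γ/(p−1)}}·|w(t)| < +∞. -/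
/-!
Test the inequality on `[0, R]` against `φ(t) = (R - t)^(μ + 2)`. Both `φ` and `φ'` vanish at `R`,
so Green's identity moves the two derivatives onto `φ`, and fractional integration by parts turns
`∫ ₀I_t^γ (|w|^p) φ` into a constant multiple of `∫ |w|^p (R - s)^(μ + 2 + γ)`, because the
right-sided fractional integral of a power of `R - t` is again such a power.

For `μ = (2 + γ) / (p - 1)` one has `μ p = μ + 2 + γ`. With `y(s) = |w(s)| (R - s)^μ` the inequality
then reads `c ∫ y^p ≤ O(R^(μ + 2)) + O(R^2) ∫ y`, and Young's inequality leaves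
`∫ y^p = O(R^(μ + 2) + R^(1 + 2 p / (p - 1)))`. If `t^α |w(t)| > M` for all large `t`, then
`∫ y^p` is at least a constant times `M^p R^(1 + (μ - α) p)`. The two conditions
`α ≤ (1 + γ) / p` and `α ≤ γ / (p - 1)` say exactly that this power of `R` dominates both powers in
the upper bound, so `M` cannot be arbitrarily large.
-/

open MeasureTheory Filter

section Calculus

open Set

/-- The open triangle `a < s < t ≤ b` in the `(t, s)`-plane, over which fractional integration by
parts exchanges the order of integration. -/
def lowerTriangle (a b : ℝ) : Set (ℝ × ℝ) :=
  {z | a < z.2 ∧ z.2 < z.1 ∧ z.1 ≤ b}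

lemma measurableSet_lowerTriangle (a b : ℝ) : MeasurableSet (lowerTriangle a b) :=
  (measurableSet_lt measurable_const measurable_snd).inter <|
    (measurableSet_lt measurable_snd measurable_fst).inter <|
      measurableSet_le measurable_fst measurable_const

section TriangleSwap

variable {E : Type*} [NormedAddCommGroup E] [NormedSpace ℝ E] {a b : ℝ} {G : ℝ → ℝ → E}

lemma integral_indicator_lowerTriangle_fst (t : ℝ) :
    ∫ s, (lowerTriangle a b).indicator (fun z => G z.1 z.2) (t, s)
      = (Ioc a b).indicator (fun t => ∫ s in a..t, G t s) t := by
  by_cases ht : t ∈ Ioc a b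
  · rw [indicator_of_mem ht, intervalIntegral.integral_of_le ht.1.le,
      integral_Ioc_eq_integral_Ioo, ← integral_indicator measurableSet_Ioo]
    congr 1 with s
    simp [indicator, lowerTriangle, ht.2]
  · rw [indicator_of_notMem ht, ← integral_zero ℝ E]
    congr 1 with s
    exact indicator_of_notMem (fun hz => ht ⟨hz.1.trans hz.2.1, hz.2.2⟩) _

lemma integral_indicator_lowerTriangle_snd (s : ℝ) :
    ∫ t, (lowerTriangle a b).indicator (fun z => G z.1 z.2) (t, s)
      = (Ioc a b).indicator (fun s => ∫ t in s..b, G t s) s := by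
  by_cases hs : s ∈ Ioc a b
  · rw [indicator_of_mem hs, intervalIntegral.integral_of_le hs.2,
      ← integral_indicator measurableSet_Ioc]
    congr 1 with t
    simp [indicator, lowerTriangle, hs.1]
  · rw [indicator_of_notMem hs, ← integral_zero ℝ E]
    congr 1 with t
    exact indicator_of_notMem (fun hz => hs ⟨hz.1, hz.2.1.le.trans hz.2.2⟩) _

lemma intervalIntegrable_integral_of_integrableOn_lowerTriangle (hab : a ≤ b)
    (hG : IntegrableOn (fun z : ℝ × ℝ => G z.1 z.2) (lowerTriangle a b)) :
    IntervalIntegrable (fun t => ∫ s in a..t, G t s) volume a b := by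
  rw [intervalIntegrable_iff_integrableOn_Ioc_of_le hab,
    ← integrable_indicator_iff measurableSet_Ioc]
  simpa only [integral_indicator_lowerTriangle_fst] using
    ((integrable_indicator_iff (measurableSet_lowerTriangle a b)).2 hG).integral_prod_left

lemma integral_integral_swap_lowerTriangle (hab : a ≤ b)
    (hG : IntegrableOn (fun z : ℝ × ℝ => G z.1 z.2) (lowerTriangle a b)) :
    ∫ t in a..b, ∫ s in a..t, G t s = ∫ s in a..b, ∫ t in s..b, G t s := by
  have hswap := integral_integral_swap (f := fun t s =>
    (lowerTriangle a b).indicator (fun z => G z.1 z.2) (t, s))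
    ((integrable_indicator_iff (measurableSet_lowerTriangle a b)).2 hG)
  simpa only [integral_indicator_lowerTriangle_fst, integral_indicator_lowerTriangle_snd,
    integral_indicator measurableSet_Ioc, ← intervalIntegral.integral_of_le hab] using hswap

end TriangleSwap

lemma integrableOn_lowerTriangle_convolution_mul {R : ℝ} {k f φ : ℝ → ℝ} (hR : 0 ≤ R)
    (hk : IntervalIntegrable k volume 0 R) (hf : IntervalIntegrable f volume 0 R)
    (hφ : ContinuousOn φ (Icc 0 R)) :
    IntegrableOn (fun z : ℝ × ℝ => k (z.1 - z.2) * f z.2 * φ z.1) (lowerTriangle 0 R) := by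
  rw [intervalIntegrable_iff_integrableOn_Ioc_of_le hR,
    ← integrable_indicator_iff measurableSet_Ioc] at hk hf
  have hmaps : MapsTo Prod.fst (lowerTriangle 0 R) (Icc 0 R) :=
    fun z hz => ⟨(hz.1.trans hz.2.1).le, hz.2.2⟩
  have hconv : Integrable (fun z : ℝ × ℝ =>
      (Ioc 0 R).indicator f z.2 * (Ioc 0 R).indicator k (z.1 - z.2)) :=
    hf.convolution_integrand (ContinuousLinearMap.mul ℝ ℝ) hk
  have hφm : AEStronglyMeasurable (fun z : ℝ × ℝ => φ z.1)
      (volume.restrict (lowerTriangle 0 R)) :=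
    (hφ.comp continuousOn_fst hmaps).aestronglyMeasurable (measurableSet_lowerTriangle 0 R)
  obtain ⟨C, hC⟩ := isCompact_Icc.exists_bound_of_continuousOn hφ
  refine IntegrableOn.congr_fun (hconv.integrableOn.mul_bdd hφm (ae_restrict_of_forall_mem
    (measurableSet_lowerTriangle 0 R) fun z hz => hC z.1 (hmaps hz)))
    (fun z hz => ?_) (measurableSet_lowerTriangle 0 R)
  obtain ⟨hs, hst, ht⟩ := hz
  have hdiff : z.1 - z.2 ∈ Ioc 0 R := ⟨by linarith, by linarith⟩
  have hsnd : z.2 ∈ Ioc 0 R := ⟨hs, by linarith⟩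
  simp only [indicator_of_mem hdiff, indicator_of_mem hsnd, mul_comm (f _)]

/-- The right-sided Riemann–Liouville fractional integral `(ₜI_R^σ φ)(s)`, the adjoint of `rlInt`
on `[0, R]`. -/
noncomputable def rlIntRight (σ R : ℝ) (φ : ℝ → ℝ) (s : ℝ) : ℝ :=
  (1 / Real.Gamma σ) * ∫ t in s..R, (t - s) ^ (σ - 1) * φ t

section IntegrationByParts

variable {σ R : ℝ} {f φ : ℝ → ℝ}

lemma integrableOn_lowerTriangle_rlKernel (hσ : 0 < σ) (hR : 0 ≤ R)
    (hf : IntervalIntegrable f volume 0 R) (hφ : ContinuousOn φ (Icc 0 R)) :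
    IntegrableOn (fun z : ℝ × ℝ => (z.1 - z.2) ^ (σ - 1) * f z.2 * φ z.1) (lowerTriangle 0 R) :=
  integrableOn_lowerTriangle_convolution_mul (k := fun x => x ^ (σ - 1)) hR
    (intervalIntegral.intervalIntegrable_rpow' (by linarith)) hf hφ

lemma rlInt_mul (σ : ℝ) (f φ : ℝ → ℝ) (t : ℝ) :
    rlInt σ f t * φ t = (1 / Real.Gamma σ) * ∫ s in 0..t, (t - s) ^ (σ - 1) * f s * φ t := by
  rw [rlInt, intervalIntegral.integral_mul_const, mul_assoc]

lemma mul_rlIntRight (σ R : ℝ) (f φ : ℝ → ℝ) (s : ℝ) :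
    f s * rlIntRight σ R φ s
      = (1 / Real.Gamma σ) * ∫ t in s..R, (t - s) ^ (σ - 1) * f s * φ t := by
  simp only [rlIntRight, mul_left_comm _ (f s), mul_assoc, mul_comm _ (f s),
    intervalIntegral.integral_const_mul]

lemma intervalIntegrable_rlInt_mul (hσ : 0 < σ) (hR : 0 ≤ R)
    (hf : IntervalIntegrable f volume 0 R) (hφ : ContinuousOn φ (Icc 0 R)) :
    IntervalIntegrable (fun t => rlInt σ f t * φ t) volume 0 R := by
  simp only [rlInt_mul]
  exact (intervalIntegrable_integral_of_integrableOn_lowerTriangle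
    (G := fun t s => (t - s) ^ (σ - 1) * f s * φ t) hR
    (integrableOn_lowerTriangle_rlKernel hσ hR hf hφ)).const_mul _

theorem integral_rlInt_mul (hσ : 0 < σ) (hR : 0 ≤ R)
    (hf : IntervalIntegrable f volume 0 R) (hφ : ContinuousOn φ (Icc 0 R)) :
    ∫ t in 0..R, rlInt σ f t * φ t = ∫ s in 0..R, f s * rlIntRight σ R φ s := by
  simp only [rlInt_mul, mul_rlIntRight, intervalIntegral.integral_const_mul]
  rw [integral_integral_swap_lowerTriangle (G := fun t s => (t - s) ^ (σ - 1) * f s * φ t) hR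
    (integrableOn_lowerTriangle_rlKernel hσ hR hf hφ)]

end IntegrationByParts

lemma integral_rpow_mul_sub_rpow_s16 {u v a : ℝ} (hu : 0 < u) (hv : 0 < v) (ha : 0 < a) :
    ∫ x in 0..a, x ^ (u - 1) * (a - x) ^ (v - 1)
      = a ^ (u + v - 1) * ProbabilityTheory.beta u v := by
  have hbeta : Complex.betaIntegral u v = (ProbabilityTheory.beta u v : ℂ) := by
    rw [Complex.betaIntegral_eq_Gamma_mul_div _ _ (by simpa) (by simpa), ProbabilityTheory.beta]
    push_cast [← Complex.Gamma_ofReal]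
    rfl
  have hscaled := Complex.betaIntegral_scaled u v ha
  rw [hbeta] at hscaled
  apply Complex.ofReal_injective
  rw [← intervalIntegral.integral_ofReal, Complex.ofReal_mul, Complex.ofReal_cpow ha.le]
  push_cast
  rw [← hscaled]
  refine intervalIntegral.integral_congr fun x hx => ?_
  rw [uIcc_of_le ha.le] at hx
  simp only [Complex.ofReal_cpow hx.1, Complex.ofReal_cpow (sub_nonneg.2 hx.2)]
  push_cast
  rfl

lemma rlIntRight_sub_rpow {σ r R s : ℝ} (hσ : 0 < σ) (hr : -1 < r) (hs : s < R) :
    rlIntRight σ R (fun t => (R - t) ^ r) s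
      = Real.Gamma (r + 1) / Real.Gamma (r + 1 + σ) * (R - s) ^ (r + σ) := by
  have hbeta := integral_rpow_mul_sub_rpow_s16 hσ (by linarith : 0 < r + 1) (sub_pos.2 hs)
  have hshift := intervalIntegral.integral_comp_sub_right (a := s) (b := R)
    (fun x => x ^ (σ - 1) * (R - s - x) ^ (r + 1 - 1)) s
  have hΓ := (Real.Gamma_pos_of_pos hσ).ne'
  simp only [sub_self, sub_sub_sub_cancel_right, add_sub_cancel_right] at hshift hbeta
  rw [rlIntRight, hshift, hbeta, ProbabilityTheory.beta, add_comm σ, add_right_comm,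
    add_sub_cancel_right]
  field_simp

lemma integral_deriv_deriv_mul {a b : ℝ} {u u' u'' v v' v'' : ℝ → ℝ}
    (hu : ∀ t ∈ uIcc a b, HasDerivWithinAt u (u' t) (uIcc a b) t)
    (hu' : ∀ t ∈ uIcc a b, HasDerivWithinAt u' (u'' t) (uIcc a b) t)
    (hv : ∀ t ∈ uIcc a b, HasDerivWithinAt v (v' t) (uIcc a b) t)
    (hv' : ∀ t ∈ uIcc a b, HasDerivWithinAt v' (v'' t) (uIcc a b) t)
    (hu'' : IntervalIntegrable u'' volume a b) (hv'' : IntervalIntegrable v'' volume a b) :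
    ∫ t in a..b, u'' t * v t
      = (u' b * v b - u b * v' b) - (u' a * v a - u a * v' a) + ∫ t in a..b, u t * v'' t := by
  have hui : IntervalIntegrable u' volume a b :=
    ContinuousOn.intervalIntegrable fun t ht => (hu' t ht).continuousWithinAt
  have hvi : IntervalIntegrable v' volume a b :=
    ContinuousOn.intervalIntegrable fun t ht => (hv' t ht).continuousWithinAt
  have huv' := intervalIntegral.integral_mul_deriv_eq_deriv_mul_of_hasDerivWithinAt hu hv' hui hv''
  have hvu' := intervalIntegral.integral_mul_deriv_eq_deriv_mul_of_hasDerivWithinAt hv hu' hvi hu''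
  simp only [mul_comm (v _), mul_comm (v' _)] at hvu'
  linarith

end Calculus

section TestFunction

open Set

/-- On `[0, R]` the function `w` satisfies `w'' + a w ≥ b ₀I_t^γ f` almost everywhere, where `w'`
and `w''` are its first two derivatives. Only integrability of `w''` is asked for, and the
derivatives at `0` and `R` are one-sided. -/
structure IsWaveSupersolutionOn (γ a b R : ℝ) (f w w' w'' : ℝ → ℝ) : Prop where
  hasDeriv : ∀ t ∈ Icc 0 R, HasDerivWithinAt w (w' t) (Icc 0 R) t
  hasDeriv' : ∀ t ∈ Icc 0 R, HasDerivWithinAt w' (w'' t) (Icc 0 R) t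
  integrable : IntervalIntegrable w'' volume 0 R
  ineq : ∀ᵐ t ∂volume.restrict (Icc 0 R), b * rlInt γ f t ≤ w'' t + a * w t

namespace IsWaveSupersolutionOn

variable {γ a b R : ℝ} {f w w' w'' : ℝ → ℝ}

lemma continuousOn (h : IsWaveSupersolutionOn γ a b R f w w' w'') : ContinuousOn w (Icc 0 R) :=
  fun t ht => (h.hasDeriv t ht).continuousWithinAt

lemma of_Ici (hR : 0 ≤ R) (hw : ∀ t ∈ Ici (0 : ℝ), HasDerivWithinAt w (w' t) (Ici 0) t)
    (hw' : ∀ t ∈ Ici (0 : ℝ), HasDerivWithinAt w' (w'' t) (Ici 0) t)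
    (hw'' : LocallyIntegrableOn w'' (Ici 0))
    (hineq : ∀ᵐ t ∂volume.restrict (Ici (0 : ℝ)), b * rlInt γ f t ≤ w'' t + a * w t) :
    IsWaveSupersolutionOn γ a b R f w w' w'' where
  hasDeriv t ht := (hw t ht.1).mono Icc_subset_Ici_self
  hasDeriv' t ht := (hw' t ht.1).mono Icc_subset_Ici_self
  integrable := (intervalIntegrable_iff_integrableOn_Icc_of_le hR).2
    (hw''.integrableOn_compact_subset Icc_subset_Ici_self isCompact_Icc)
  ineq := ae_restrict_of_ae_restrict_of_subset Icc_subset_Ici_self hineq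

lemma mul_integral_mul_rlIntRight_le {φ φ' φ'' : ℝ → ℝ}
    (h : IsWaveSupersolutionOn γ a b R f w w' w'') (hγ : 0 < γ) (hR : 0 ≤ R)
    (hf : IntervalIntegrable f volume 0 R)
    (hφ : ∀ t ∈ Icc 0 R, HasDerivWithinAt φ (φ' t) (Icc 0 R) t)
    (hφ' : ∀ t ∈ Icc 0 R, HasDerivWithinAt φ' (φ'' t) (Icc 0 R) t)
    (hφ'' : IntervalIntegrable φ'' volume 0 R) (hφ0 : ∀ t ∈ Icc 0 R, 0 ≤ φ t)
    (hφR : φ R = 0) (hφ'R : φ' R = 0) :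
    b * ∫ s in 0..R, f s * rlIntRight γ R φ s
      ≤ w 0 * φ' 0 - w' 0 * φ 0 + ∫ t in 0..R, w t * (φ'' t + a * φ t) := by
  have hφc : ContinuousOn φ (uIcc 0 R) := by
    rw [uIcc_of_le hR]
    exact fun t ht => (hφ t ht).continuousWithinAt
  have hwc : ContinuousOn w (uIcc 0 R) := by
    rw [uIcc_of_le hR]
    exact h.continuousOn
  have hwφ : IntervalIntegrable (fun t => a * (w t * φ t)) volume 0 R :=
    ((hwc.mul hφc).const_mul a).intervalIntegrable
  have htest : b * ∫ t in 0..R, rlInt γ f t * φ t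
      ≤ ∫ t in 0..R, (w'' t * φ t + a * (w t * φ t)) := by
    rw [← intervalIntegral.integral_const_mul]
    refine intervalIntegral.integral_mono_ae_restrict hR
      ((intervalIntegrable_rlInt_mul hγ hR hf (uIcc_of_le hR ▸ hφc)).const_mul b)
      ((h.integrable.mul_continuousOn hφc).add hwφ) ?_
    filter_upwards [h.ineq, ae_restrict_mem measurableSet_Icc] with t ht htR
    calc b * (rlInt γ f t * φ t) = b * rlInt γ f t * φ t := (mul_assoc _ _ _).symm
      _ ≤ (w'' t + a * w t) * φ t := mul_le_mul_of_nonneg_right ht (hφ0 t htR)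
      _ = w'' t * φ t + a * (w t * φ t) := by ring
  have hgreen : ∫ t in 0..R, w'' t * φ t
      = w 0 * φ' 0 - w' 0 * φ 0 + ∫ t in 0..R, w t * φ'' t := by
    rw [integral_deriv_deriv_mul (u' := w') (v' := φ') (v'' := φ'')
      (by simpa only [uIcc_of_le hR] using h.hasDeriv)
      (by simpa only [uIcc_of_le hR] using h.hasDeriv')
      (by simpa only [uIcc_of_le hR] using hφ)
      (by simpa only [uIcc_of_le hR] using hφ') h.integrable hφ'', hφR, hφ'R]
    ring
  calc b * ∫ s in 0..R, f s * rlIntRight γ R φ s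
      = b * ∫ t in 0..R, rlInt γ f t * φ t := by
        rw [integral_rlInt_mul hγ hR hf (uIcc_of_le hR ▸ hφc)]
    _ ≤ ∫ t in 0..R, (w'' t * φ t + a * (w t * φ t)) := htest
    _ = w 0 * φ' 0 - w' 0 * φ 0
          + ((∫ t in 0..R, w t * φ'' t) + ∫ t in 0..R, a * (w t * φ t)) := by
        rw [intervalIntegral.integral_add (h.integrable.mul_continuousOn hφc) hwφ, hgreen,
          add_assoc]
    _ = w 0 * φ' 0 - w' 0 * φ 0 + ∫ t in 0..R, w t * (φ'' t + a * φ t) := by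
        rw [← intervalIntegral.integral_add (hφ''.continuousOn_mul hwc) hwφ]
        simp only [mul_add, mul_left_comm]

end IsWaveSupersolutionOn

lemma hasDerivAt_sub_rpow {R r t : ℝ} (hr : 1 ≤ r) :
    HasDerivAt (fun t => (R - t) ^ r) (-(r * (R - t) ^ (r - 1))) t := by
  simpa using ((hasDerivAt_id t).const_sub R).rpow_const (p := r) (Or.inr hr)

lemma continuous_sub_rpow {r : ℝ} (R : ℝ) (hr : 0 ≤ r) : Continuous fun t : ℝ => (R - t) ^ r :=
  (continuous_const.sub continuous_id).rpow_const fun _ => Or.inr hr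

lemma mul_rpow_add_rpow_add_two_le {μ a r R x : ℝ} (hμ : 0 ≤ μ) (hr : 0 ≤ r) (hrR : r ≤ R)
    (hR : 1 ≤ R) :
    x * ((μ + 2) * (μ + 1) * r ^ μ + a * r ^ (μ + 2))
      ≤ ((μ + 2) * (μ + 1) + |a|) * R ^ 2 * (|x| * r ^ μ) := by
  have hquad : |(μ + 2) * (μ + 1) + a * r ^ 2| ≤ ((μ + 2) * (μ + 1) + |a|) * R ^ 2 :=
    calc |(μ + 2) * (μ + 1) + a * r ^ 2|
        ≤ |(μ + 2) * (μ + 1)| + |a * r ^ 2| := abs_add_le _ _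
      _ = (μ + 2) * (μ + 1) * 1 + |a| * r ^ 2 := by
          rw [abs_mul a, abs_of_nonneg (by positivity : 0 ≤ (μ + 2) * (μ + 1)),
            abs_of_nonneg (sq_nonneg r), mul_one]
      _ ≤ (μ + 2) * (μ + 1) * R ^ 2 + |a| * R ^ 2 := by
          gcongr
          exact one_le_pow₀ hR
      _ = ((μ + 2) * (μ + 1) + |a|) * R ^ 2 := by ring
  calc x * ((μ + 2) * (μ + 1) * r ^ μ + a * r ^ (μ + 2))
      = x * ((μ + 2) * (μ + 1) + a * r ^ 2) * r ^ μ := by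
        rw [Real.rpow_add_of_nonneg hr hμ zero_le_two, Real.rpow_two]
        ring
    _ ≤ |x * ((μ + 2) * (μ + 1) + a * r ^ 2)| * r ^ μ :=
        mul_le_mul_of_nonneg_right (le_abs_self _) (Real.rpow_nonneg hr μ)
    _ = |x| * |(μ + 2) * (μ + 1) + a * r ^ 2| * r ^ μ := by rw [abs_mul]
    _ ≤ |x| * (((μ + 2) * (μ + 1) + |a|) * R ^ 2) * r ^ μ := by gcongr
    _ = ((μ + 2) * (μ + 1) + |a|) * R ^ 2 * (|x| * r ^ μ) := by ring

namespace IsWaveSupersolutionOn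

variable {γ a b R μ : ℝ} {f w w' w'' : ℝ → ℝ}

lemma mul_integral_mul_sub_rpow_le (h : IsWaveSupersolutionOn γ a b R f w w' w'') (hγ : 0 < γ)
    (hR : 0 ≤ R) (hf : IntervalIntegrable f volume 0 R) (hμ : 0 ≤ μ) :
    b * (Real.Gamma (μ + 3) / Real.Gamma (μ + 3 + γ)) * ∫ s in 0..R, f s * (R - s) ^ (μ + 2 + γ)
      ≤ -(w' 0 * R ^ (μ + 2)) - (μ + 2) * (w 0 * R ^ (μ + 1))
        + ∫ t in 0..R, w t * ((μ + 2) * (μ + 1) * (R - t) ^ μ + a * (R - t) ^ (μ + 2)) := by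
  have hφ (t : ℝ) : HasDerivAt (fun t => (R - t) ^ (μ + 2))
      (-((μ + 2) * (R - t) ^ (μ + 1))) t :=
    (hasDerivAt_sub_rpow (by linarith)).congr_deriv (by ring_nf)
  have hφ' (t : ℝ) : HasDerivAt (fun t => -((μ + 2) * (R - t) ^ (μ + 1)))
      ((μ + 2) * (μ + 1) * (R - t) ^ μ) t :=
    ((hasDerivAt_sub_rpow (by linarith)).const_mul (μ + 2)).fun_neg.congr_deriv (by ring_nf)
  have hweak := h.mul_integral_mul_rlIntRight_le hγ hR hf
    (fun t _ => (hφ t).hasDerivWithinAt) (fun t _ => (hφ' t).hasDerivWithinAt)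
    (((continuous_sub_rpow R hμ).const_mul _).intervalIntegrable 0 R)
    (fun t ht => Real.rpow_nonneg (sub_nonneg.2 ht.2) _)
    (by simp [(by linarith : μ + 2 ≠ 0)]) (by simp [(by linarith : μ + 1 ≠ 0)])
  have hadjoint : ∫ s in 0..R, f s * rlIntRight γ R (fun t => (R - t) ^ (μ + 2)) s
      = Real.Gamma (μ + 3) / Real.Gamma (μ + 3 + γ) * ∫ s in 0..R, f s * (R - s) ^ (μ + 2 + γ) := by
    rw [← intervalIntegral.integral_const_mul]
    refine intervalIntegral.integral_congr_Ioo_of_le hR fun s hs => ?_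
    rw [rlIntRight_sub_rpow hγ (by linarith) hs.2, add_assoc μ 2 1, two_add_one_eq_three]
    ring
  rw [hadjoint, ← mul_assoc] at hweak
  simp only [sub_zero] at hweak
  linarith

lemma mul_integral_mul_sub_rpow_le_of_one_le (h : IsWaveSupersolutionOn γ a b R f w w' w'')
    (hγ : 0 < γ) (hR : 1 ≤ R) (hf : IntervalIntegrable f volume 0 R) (hμ : 0 ≤ μ) :
    b * (Real.Gamma (μ + 3) / Real.Gamma (μ + 3 + γ)) * ∫ s in 0..R, f s * (R - s) ^ (μ + 2 + γ)
      ≤ (|w' 0| + (μ + 2) * |w 0|) * R ^ (μ + 2)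
        + ((μ + 2) * (μ + 1) + |a|) * R ^ 2 * ∫ t in 0..R, |w t| * (R - t) ^ μ := by
  have hR0 : 0 ≤ R := zero_le_one.trans hR
  have hwc : ContinuousOn w (uIcc 0 R) := by
    rw [uIcc_of_le hR0]
    exact h.continuousOn
  have hboundary : -(w' 0 * R ^ (μ + 2)) - (μ + 2) * (w 0 * R ^ (μ + 1))
      ≤ (|w' 0| + (μ + 2) * |w 0|) * R ^ (μ + 2) := by
    have hw' : -w' 0 * R ^ (μ + 2) ≤ |w' 0| * R ^ (μ + 2) := by
      gcongr
      exact neg_le_abs _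
    have hw : -w 0 * R ^ (μ + 1) ≤ |w 0| * R ^ (μ + 2) := by
      gcongr
      · exact neg_le_abs _
      · norm_num
    linarith [mul_le_mul_of_nonneg_left hw (by linarith : 0 ≤ μ + 2)]
  have hcμ := (continuous_sub_rpow R hμ).continuousOn (s := uIcc 0 R)
  have hcμ2 := (continuous_sub_rpow R (by linarith : 0 ≤ μ + 2)).continuousOn (s := uIcc 0 R)
  refine (h.mul_integral_mul_sub_rpow_le hγ hR0 hf hμ).trans (add_le_add hboundary ?_)
  rw [← intervalIntegral.integral_const_mul]
  exact intervalIntegral.integral_mono_on hR0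
    (hwc.mul ((hcμ.const_mul _).add (hcμ2.const_mul a))).intervalIntegrable
    ((hwc.abs.mul hcμ).const_mul _).intervalIntegrable
    fun t ht => mul_rpow_add_rpow_add_two_le hμ (sub_nonneg.2 ht.2) (by linarith [ht.1]) hR

end IsWaveSupersolutionOn

end TestFunction

section Bounds

open Set

lemma exists_mul_le_mul_rpow_add_mul_rpow {p q ε : ℝ} (hpq : p.HolderConjugate q) (hε : 0 < ε) :
    ∃ K, 0 ≤ K ∧ ∀ x y, 0 ≤ x → 0 ≤ y → y * x ≤ ε * x ^ p + K * y ^ q := by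
  have hεp : 0 < ε * p := mul_pos hε hpq.pos
  set c := (ε * p) ^ (1 / p) with hc
  have hc0 : 0 < c := Real.rpow_pos_of_pos hεp _
  have hcp : c ^ p = ε * p := by
    rw [hc, ← Real.rpow_mul hεp.le, one_div_mul_cancel hpq.ne_zero, Real.rpow_one]
  refine ⟨1 / (c ^ q * q), by have := hpq.symm.pos; positivity, fun x y hx hy => ?_⟩
  calc y * x = c * x * (y / c) := by field_simp
    _ ≤ (c * x) ^ p / p + (y / c) ^ q / q :=
        Real.young_inequality_of_nonneg (by positivity) (by positivity) hpq
    _ = ε * x ^ p + 1 / (c ^ q * q) * y ^ q := by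
        rw [Real.mul_rpow hc0.le hx, Real.div_rpow hy hc0.le, hcp]
        have := hpq.ne_zero
        field_simp

lemma exists_mul_integral_le_integral_rpow_add {p q ε : ℝ} (hpq : p.HolderConjugate q)
    (hε : 0 < ε) :
    ∃ K, 0 ≤ K ∧ ∀ {a b A : ℝ} {u : ℝ → ℝ}, a ≤ b → 0 ≤ A → ContinuousOn u (uIcc a b) →
      (∀ t ∈ Icc a b, 0 ≤ u t) →
      A * ∫ t in a..b, u t ≤ ε * (∫ t in a..b, u t ^ p) + K * A ^ q * (b - a) := by
  obtain ⟨K, hK, hyoung⟩ := exists_mul_le_mul_rpow_add_mul_rpow hpq hε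
  refine ⟨K, hK, fun {a b A u} hab hA hu hu0 => ?_⟩
  have hup : IntervalIntegrable (fun t => ε * u t ^ p) volume a b :=
    ((hu.rpow_const fun _ _ => Or.inr hpq.nonneg).const_mul ε).intervalIntegrable
  calc A * ∫ t in a..b, u t = ∫ t in a..b, A * u t :=
        (intervalIntegral.integral_const_mul _ _).symm
    _ ≤ ∫ t in a..b, (ε * u t ^ p + K * A ^ q) :=
        intervalIntegral.integral_mono_on hab (hu.const_mul A).intervalIntegrable
          (hup.add intervalIntegrable_const) fun t ht => hyoung _ _ (hu0 t ht) hA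
    _ = ε * (∫ t in a..b, u t ^ p) + K * A ^ q * (b - a) := by
        rw [intervalIntegral.integral_add hup intervalIntegrable_const,
          intervalIntegral.integral_const_mul, intervalIntegral.integral_const, smul_eq_mul,
          mul_comm (b - a)]

lemma integral_abs_rpow_mul_sub_rpow {p r R : ℝ} (μ : ℝ) (w : ℝ → ℝ) (hR : 0 ≤ R)
    (hμ : μ * p = r) :
    ∫ s in 0..R, |w s| ^ p * (R - s) ^ r = ∫ s in 0..R, (|w s| * (R - s) ^ μ) ^ p := by
  refine intervalIntegral.integral_congr fun s hs => ?_
  rw [uIcc_of_le hR] at hs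
  have hRs : 0 ≤ R - s := sub_nonneg.2 hs.2
  simp only [Real.mul_rpow (abs_nonneg _) (Real.rpow_nonneg hRs μ), ← Real.rpow_mul hRs, hμ]

lemma exists_integral_abs_mul_sub_rpow_rpow_le {γ p q a b μ : ℝ} {w w' w'' : ℝ → ℝ}
    (hγ : 0 < γ) (hb : 0 < b) (hpq : p.HolderConjugate q) (hμ : 0 ≤ μ) (hμp : μ * p = μ + 2 + γ)
    (h : ∀ R, 1 ≤ R → IsWaveSupersolutionOn γ a b R (fun s => |w s| ^ p) w w' w'') :
    ∃ B, 0 ≤ B ∧ ∀ R, 1 ≤ R →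
      ∫ s in 0..R, (|w s| * (R - s) ^ μ) ^ p ≤ B * (R ^ (μ + 2) + R ^ (1 + 2 * q)) := by
  set β := b * (Real.Gamma (μ + 3) / Real.Gamma (μ + 3 + γ)) with hβdef
  set D := |w' 0| + (μ + 2) * |w 0| with hDdef
  set C := (μ + 2) * (μ + 1) + |a| with hCdef
  have hβ : 0 < β := mul_pos hb
    (div_pos (Real.Gamma_pos_of_pos (by linarith)) (Real.Gamma_pos_of_pos (by linarith)))
  have hD : 0 ≤ D := by positivity
  have hC : 0 ≤ C := by positivity
  obtain ⟨K, hK, hyoung⟩ := exists_mul_integral_le_integral_rpow_add hpq (half_pos hβ)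
  refine ⟨2 / β * (D + K * C ^ q), mul_nonneg (by positivity) (add_nonneg hD (by positivity)),
    fun R hR => ?_⟩
  have hR0 : 0 ≤ R := zero_le_one.trans hR
  have hwc : ContinuousOn w (uIcc 0 R) := uIcc_of_le hR0 ▸ (h R hR).continuousOn
  have hweak := (h R hR).mul_integral_mul_sub_rpow_le_of_one_le hγ hR
    (hwc.abs.rpow_const fun _ _ => Or.inr hpq.nonneg).intervalIntegrable hμ
  rw [integral_abs_rpow_mul_sub_rpow μ w hR0 hμp, ← hβdef, ← hDdef, ← hCdef] at hweak
  have habsorb := hyoung (u := fun s => |w s| * (R - s) ^ μ) hR0 (by positivity : 0 ≤ C * R ^ 2)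
    (hwc.abs.mul (continuous_sub_rpow R hμ).continuousOn)
    fun t ht => mul_nonneg (abs_nonneg _) (Real.rpow_nonneg (sub_nonneg.2 ht.2) μ)
  have hpow : (C * R ^ 2) ^ q * (R - 0) = C ^ q * R ^ (1 + 2 * q) := by
    rw [Real.mul_rpow hC (sq_nonneg R), ← Real.rpow_natCast_mul hR0, sub_zero,
      Real.rpow_add (by linarith), Real.rpow_one]
    push_cast
    ring
  rw [mul_assoc K, hpow] at habsorb
  set X := ∫ s in 0..R, (|w s| * (R - s) ^ μ) ^ p
  calc X = 2 / β * (β / 2 * X) := by field_simp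
    _ ≤ 2 / β * (D * R ^ (μ + 2) + K * C ^ q * R ^ (1 + 2 * q)) := by
        gcongr
        linarith
    _ ≤ 2 / β * (D * (R ^ (μ + 2) + R ^ (1 + 2 * q))
          + K * C ^ q * (R ^ (μ + 2) + R ^ (1 + 2 * q))) := by
        gcongr <;> simp [Real.rpow_nonneg hR0]
    _ = 2 / β * (D + K * C ^ q) * (R ^ (μ + 2) + R ^ (1 + 2 * q)) := by ring

lemma mul_rpow_le_integral_mul_sub_rpow_rpow {p α μ M R : ℝ} {u : ℝ → ℝ} (hp : 0 ≤ p)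
    (hα : 0 ≤ α) (hμ : 0 ≤ μ) (hM : 0 ≤ M) (hR : 0 < R) (hu : ContinuousOn u (Icc 0 R))
    (hu0 : ∀ t ∈ Icc 0 R, 0 ≤ u t) (hMu : ∀ t ∈ Icc (R / 4) (R / 2), M ≤ t ^ α * u t) :
    (M / 2 ^ μ) ^ p / 4 * R ^ (1 + (μ - α) * p) ≤ ∫ s in 0..R, (u s * (R - s) ^ μ) ^ p := by
  have hcont : ContinuousOn (fun s => (u s * (R - s) ^ μ) ^ p) (uIcc 0 R) := by
    rw [uIcc_of_le hR.le]
    exact (hu.mul (continuous_sub_rpow R hμ).continuousOn).rpow_const fun _ _ => Or.inr hp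
  have hsub : uIcc (R / 4) (R / 2) ⊆ uIcc 0 R := by
    rw [uIcc_of_le (by linarith), uIcc_of_le hR.le]
    exact Icc_subset_Icc (by linarith) (by linarith)
  have hlower : ∀ s ∈ Icc (R / 4) (R / 2),
      (M / 2 ^ μ * R ^ (μ - α)) ^ p ≤ (u s * (R - s) ^ μ) ^ p := by
    intro s hs
    have hus : 0 ≤ u s := hu0 s ⟨by linarith [hs.1], by linarith [hs.2]⟩
    have hMR : M / R ^ α ≤ u s := by
      rw [div_le_iff₀' (by positivity)]
      refine (hMu s hs).trans (mul_le_mul_of_nonneg_right ?_ hus)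
      exact Real.rpow_le_rpow (by linarith [hs.1]) (by linarith [hs.2]) hα
    refine Real.rpow_le_rpow (by positivity) ?_ hp
    calc M / 2 ^ μ * R ^ (μ - α) = M / R ^ α * (R / 2) ^ μ := by
          rw [Real.rpow_sub hR, Real.div_rpow hR.le zero_le_two]
          ring
      _ ≤ u s * (R - s) ^ μ := by
          gcongr
          linarith [hs.2]
  calc (M / 2 ^ μ) ^ p / 4 * R ^ (1 + (μ - α) * p)
      = ∫ _ in (R / 4)..(R / 2), (M / 2 ^ μ * R ^ (μ - α)) ^ p := by
        rw [intervalIntegral.integral_const, smul_eq_mul, Real.rpow_add hR, Real.rpow_one,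
          Real.mul_rpow (by positivity) (by positivity), ← Real.rpow_mul hR.le]
        ring
    _ ≤ ∫ s in (R / 4)..(R / 2), (u s * (R - s) ^ μ) ^ p :=
        intervalIntegral.integral_mono_on (by linarith) intervalIntegrable_const
          (hcont.mono hsub).intervalIntegrable hlower
    _ ≤ ∫ s in 0..R, (u s * (R - s) ^ μ) ^ p := by
        refine intervalIntegral.integral_mono_interval (by linarith) (by linarith) (by linarith)
          ?_ hcont.intervalIntegrable
        filter_upwards [ae_restrict_mem measurableSet_Ioc] with s hs
        exact Real.rpow_nonneg (mul_nonneg (hu0 s (Ioc_subset_Icc_self hs))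
          (Real.rpow_nonneg (sub_nonneg.2 hs.2) μ)) p

lemma exists_frequently_rpow_mul_le {p α μ B : ℝ} {u : ℝ → ℝ} (hp : 0 < p) (hα : 0 ≤ α)
    (hμ : 0 ≤ μ) (hu : ∀ R, 1 ≤ R → ContinuousOn u (Icc 0 R)) (hu0 : ∀ t, 0 ≤ t → 0 ≤ u t)
    (hbound : ∀ R, 1 ≤ R →
      ∫ s in 0..R, (u s * (R - s) ^ μ) ^ p ≤ B * R ^ (1 + (μ - α) * p)) :
    ∃ M, ∃ᶠ t in atTop, t ^ α * u t ≤ M := by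
  set M := 2 ^ μ * (4 * (|B| + 1)) ^ (1 / p) with hM
  have hMp : (M / 2 ^ μ) ^ p / 4 = |B| + 1 := by
    rw [hM, mul_div_cancel_left₀ _ (by positivity), ← Real.rpow_mul (by positivity),
      one_div_mul_cancel hp.ne', Real.rpow_one, mul_div_cancel_left₀ _ four_ne_zero]
  refine ⟨M, fun hlarge => ?_⟩
  obtain ⟨T, hT⟩ := eventually_atTop.1 hlarge
  set R := 4 * max T 1
  have hTR : 4 * T ≤ R := by simp [R]
  have hR : 1 ≤ R := by linarith [le_max_right T 1]
  have hlower := mul_rpow_le_integral_mul_sub_rpow_rpow (M := M) (R := R) hp.le hα hμ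
    (by positivity) (by linarith) (hu R hR) (fun t ht => hu0 t ht.1)
    fun t ht => (not_le.1 (hT t (by linarith [ht.1]))).le
  have hRpow : 0 < R ^ (1 + (μ - α) * p) := Real.rpow_pos_of_pos (by linarith) _
  rw [hMp] at hlower
  have := le_of_mul_le_mul_right (hlower.trans (hbound R hR)) hRpow
  linarith [le_abs_self B]

lemma exists_frequently_rpow_mul_abs_le {γ p a b α : ℝ} {w w' w'' : ℝ → ℝ} (hγ : 0 < γ)
    (hp : 1 < p) (hb : 0 < b) (hα : 0 ≤ α) (hα₁ : α ≤ (1 + γ) / p) (hα₂ : α ≤ γ / (p - 1))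
    (h : ∀ R, 1 ≤ R → IsWaveSupersolutionOn γ a b R (fun s => |w s| ^ p) w w' w'') :
    ∃ M, ∃ᶠ t in atTop, t ^ α * |w t| ≤ M := by
  have hp0 : 0 < p := by linarith
  have hp1 : 0 < p - 1 := sub_pos.2 hp
  set μ := (2 + γ) / (p - 1) with hμdef
  have hμ : 0 ≤ μ := by positivity
  have hμp : μ * p = μ + 2 + γ := by
    rw [hμdef]
    field_simp
    ring
  rw [le_div_iff₀ hp0] at hα₁
  have hexp₁ : μ + 2 ≤ 1 + (μ - α) * p := by linarith
  have hexp₂ : 1 + 2 * (p / (p - 1)) ≤ 1 + (μ - α) * p := by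
    have hcrit : μ * p - 2 * (p / (p - 1)) = γ / (p - 1) * p := by
      rw [hμdef]
      ring
    linarith [mul_le_mul_of_nonneg_right hα₂ hp0.le]
  obtain ⟨B, hB, hbound⟩ := exists_integral_abs_mul_sub_rpow_rpow_le hγ hb
    (Real.HolderConjugate.conjExponent hp) hμ hμp h
  refine exists_frequently_rpow_mul_le (μ := μ) (B := B * 2) hp0 hα hμ
    (fun R hR => (h R hR).continuousOn.abs) (fun _ _ => abs_nonneg _) fun R hR => ?_
  calc ∫ s in 0..R, (|w s| * (R - s) ^ μ) ^ p
      ≤ B * (R ^ (μ + 2) + R ^ (1 + 2 * (p / (p - 1)))) := hbound R hR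
    _ ≤ B * (R ^ (1 + (μ - α) * p) + R ^ (1 + (μ - α) * p)) := by gcongr
    _ = B * 2 * R ^ (1 + (μ - α) * p) := by ring

theorem liminf_abs_eq_zero_of_frequently_rpow_mul_le {α M : ℝ} {u : ℝ → ℝ} (hα : 0 < α)
    (h : ∃ᶠ t in atTop, t ^ α * |u t| ≤ M) :
    liminf (fun t => ((|u t| : ℝ) : EReal)) atTop = 0 := by
  apply le_antisymm
  · refine EReal.le_of_forall_lt_iff_le.1 fun ε hε => ?_
    have hgrowth := ((tendsto_rpow_atTop hα).atTop_mul_const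
      (EReal.coe_pos.1 hε)).eventually_ge_atTop M
    refine liminf_le_of_frequently_le
      (((h.and_eventually hgrowth).and_eventually (eventually_gt_atTop 0)).mono ?_)
    rintro t ⟨⟨htM, hMt⟩, ht⟩
    exact EReal.coe_le_coe_iff.2
      (le_of_mul_le_mul_left (htM.trans hMt) (Real.rpow_pos_of_pos ht α))
  · exact le_liminf_of_le (by isBoundedDefault)
      (Eventually.of_forall fun t => EReal.coe_nonneg.2 (abs_nonneg _))

end Bounds

theorem liminf_props_wave_general {γ p a b : ℝ} {w w' w'' : ℝ → ℝ} (hγ : 0 < γ) (hp : 1 < p)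
    (hb : 0 < b) (hw : ∀ t ∈ Set.Ici (0 : ℝ), HasDerivWithinAt w (w' t) (Set.Ici 0) t)
    (hw' : ∀ t ∈ Set.Ici (0 : ℝ), HasDerivWithinAt w' (w'' t) (Set.Ici 0) t)
    (hw'' : LocallyIntegrableOn w'' (Set.Ici 0))
    (hineq : ∀ᵐ t ∂volume.restrict (Set.Ici (0 : ℝ)),
      b * rlInt γ (fun s => |w s| ^ p) t ≤ w'' t + a * w t) :
    liminf (fun t : ℝ => ((|w t| : ℝ) : EReal)) atTop = 0 ∧
    liminf (fun t : ℝ =>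
      ((t ^ (min ((1 + γ) / p) (γ / (p - 1))) * |w t| : ℝ) : EReal)) atTop < ⊤ := by
  set α := min ((1 + γ) / p) (γ / (p - 1))
  have hα : 0 < α := lt_min (div_pos (by linarith) (by linarith)) (div_pos hγ (by linarith))
  obtain ⟨M, hM⟩ : ∃ M, ∃ᶠ t in atTop, t ^ α * |w t| ≤ M :=
    exists_frequently_rpow_mul_abs_le hγ hp hb hα.le (min_le_left _ _) (min_le_right _ _)
      fun R hR => .of_Ici (zero_le_one.trans hR) hw hw' hw'' hineq
  exact ⟨liminf_abs_eq_zero_of_frequently_rpow_mul_le hα hM,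
    (liminf_le_of_frequently_le (hM.mono fun t ht => EReal.coe_le_coe_iff.2 ht)).trans_lt
      (EReal.coe_lt_top M)⟩

/-- Corollary 2.6 (ii): liminf |w| = 0 and liminf t^{min{(1+γ)/p, γ/(p−1)}} |w| < ∞. -/
theorem liminf_props_wave
    (γ p a b : ℝ) (w : ℝ → ℝ)
    (hγ : 0 < γ) (hp : 1 < p) (ha : 0 < a) (hb : 0 < b)
    (hw : ContDiff ℝ 2 w)
    (hw0 : ∃ t : ℝ, 0 ≤ t ∧ w t ≠ 0)
    (hineq : ∀ᵐ t ∂(volume.restrict (Set.Ici (0:ℝ))),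
      deriv (deriv w) t + a * w t ≥ b * rlInt γ (fun s => |w s| ^ p) t)
    :
    liminf (fun t : ℝ => ((|w t| : ℝ) : EReal)) atTop = 0 ∧
    liminf (fun t : ℝ =>
      ((t ^ (min ((1 + γ) / p) (γ / (p - 1))) * |w t| : ℝ) : EReal)) atTop < ⊤ := by
  have hw1 : ContDiff ℝ 1 (deriv w) := (contDiff_succ_iff_deriv.1 hw).2.2
  exact liminf_props_wave_general hγ hp hb
    (fun t _ => (hw.differentiable two_ne_zero t).hasDerivAt.hasDerivWithinAt)
    (fun t _ => (hw1.differentiable one_ne_zero t).hasDerivAt.hasDerivWithinAt)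
    ((hw1.continuous_deriv le_rfl).locallyIntegrable.locallyIntegrableOn _) hineq
end
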